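/- arXiv:2202.00877 — 3 statements merged into one kernel-verified Lean document; each statement's English description precedes it below -/
import Mathlib

section
/- Fix integers a, b ≥ 1. Assume that, as h → 0, ε = ε(h) → 0 with ε(h) ≥ h^{1/2−δ̄} eventually, for some fixed δ̄ ∈ (0,1/2). Then E( W_h^{a}·J_h^{b}·1_{|σW_h + J_h| ≤ ε} ) equals: O(h²·ε^{a+b−Y−2}) + O(h^{1+a/2}·ε^{b−Y/2}) if a is odd; O(h²·ε^{a+b−Y−2}) + O(h^{1+a/2}·ε^{b−Y}) if a and b are both even; and O(h²·ε^{a+b−Y−2}) + O(h^{(1+a)/2}·ε^{b−Y/2}) if a is even and b is odd. -/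
open MeasureTheory ProbabilityTheory Filter Asymptotics Set
open scoped Topology NNReal ENNReal Real

noncomputable section

/-- The Lévy density `s(x) = (C₊·1_{x>0} + C₋·1_{x<0})·q(x)·|x|^{−1−Y}`. -/
def levyDensity (Y Cp Cm : ℝ) (q : ℝ → ℝ) (x : ℝ) : ℝ :=
  (if 0 < x then Cp else if x < 0 then Cm else 0) * q x * |x| ^ (-1 - Y)

/-- The Lévy measure `ν(dx) = s(x) dx`. -/
def levyMeasure (Y Cp Cm : ℝ) (q : ℝ → ℝ) : Measure ℝ :=
  volume.withDensity fun x => ENNReal.ofReal (levyDensity Y Cp Cm q x)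

/-- The Lévy exponent `ψ_J(u) = ibu + ∫ (e^{iux} − 1 − iux·1_{|x|≤1}) ν(dx)`. -/
def psiJ (b Y Cp Cm : ℝ) (q : ℝ → ℝ) (u : ℝ) : ℂ :=
  Complex.I * b * u +
    ∫ x : ℝ,
      (Complex.exp (Complex.I * u * x) - 1 - (if |x| ≤ 1 then Complex.I * u * x else 0))
      ∂(levyMeasure Y Cp Cm q)

/-- The scale parameter `ς = ((C₊+C₋)Γ(−Y)|cos(πY/2)|)^{1/Y}`. -/
def varsigma (Y Cp Cm : ℝ) : ℝ :=
  ((Cp + Cm) * Real.Gamma (-Y) * |Real.cos (π * Y / 2)|) ^ (1 / Y)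

/-- The stable part of the Lévy exponent:
`ς^Y |u|^Y (1 − iβ·sgn(u)·tan(πY/2))` with `β = (C₊−C₋)/(C₊+C₋)`. -/
def stablePart (Y Cp Cm : ℝ) (u : ℝ) : ℂ :=
  (varsigma Y Cp Cm ^ Y * |u| ^ Y : ℝ) *
    (1 - Complex.I * ((Cp - Cm) / (Cp + Cm)) * Real.sign u * Real.tan (π * Y / 2))

/-- Characteristic function of `X̃_h`, the time-`h` marginal of a Brownian motion with
variance `σ²` plus an independent strictly `Y`-stable process. -/
def tildeCF (σ Y Cp Cm : ℝ) (h u : ℝ) : ℂ :=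
  Complex.exp (-(σ ^ 2 * u ^ 2 * h / 2) - h * stablePart Y Cp Cm u)

/-! Let `μ t` be the laws of a pure-jump Lévy process with jump measure at most
`c |y|^(-1-Y) dy`, and let `L` be its generator. With `2p = 1 + Y` the bump
`f(x) = (1 + x²)^(-p)` has the tail of the jump measure, so that `|L f(·/s)| ≤ K s^(-Y) f(·/s)`.
Being a characteristic function, `f` can be integrated against the forward equation, and
Grönwall's inequality shows that `∫ f((x + y)/s) μ_t(dy)` lies between `exp(∓K s^(-Y) t) f(x/s)`.
At `x = 0` this bounds the truncated second moment, `∫_{|y| ≤ s} y² dμ_t ≤ C t s^(2-Y)`; at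
distance `|x|` and `t = s^Y` it bounds the mass of `[x - s, x + s]` by `C (s/|x|)^(1+Y)`, hence
that of the shell `||y| - ε| ≤ r` by `C t ε^(-1-Y) (r + √t)`.

Let now `Z` be Gaussian of variance `h` and independent of `X ~ μ_h`. If `|σZ| > ε/2`, Gaussian
moments of high order beat any power of `h`, as `√h/ε ≤ h^δ`. Otherwise `|X| ≤ 2ε`, and the
truncated second moment gives the estimates without parity; for odd `a` the symmetry of `Z`
leaves only the set where truncating `X` differs from truncating `σZ + X`, which is contained in
the shell `||X| - ε| ≤ |σZ|`. -/

/-! ### The bump `(1 + x²)^(-p)` as a characteristic function -/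

lemma gammaMeasure_eq_withDensity_Ioi (a r : ℝ) :
    gammaMeasure a r = (volume.restrict (Ioi 0)).withDensity (gammaPDF a r) := by
  rw [gammaMeasure, ← withDensity_indicator measurableSet_Ioi]
  refine withDensity_congr_ae ?_
  filter_upwards [Measure.ae_ne volume 0] with t ht
  rcases ht.lt_or_gt with h | h
  · simp [gammaPDF_of_neg h, h.le]
  · simp [h]

lemma ae_pos_gammaMeasure (a r : ℝ) : ∀ᵐ t ∂(gammaMeasure a r), 0 < t := by
  rw [gammaMeasure_eq_withDensity_Ioi]
  exact (withDensity_absolutelyContinuous _ _).ae_le (ae_restrict_mem measurableSet_Ioi)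

lemma integral_gammaMeasure {E : Type*} [NormedAddCommGroup E] [NormedSpace ℝ E] {a r : ℝ}
    (ha : 0 < a) (hr : 0 < r) (f : ℝ → E) :
    ∫ t, f t ∂(gammaMeasure a r)
      = ∫ t in Ioi 0, (r ^ a / Real.Gamma a * t ^ (a - 1) * Real.exp (-(r * t))) • f t := by
  have hpdf : Measurable (gammaPDF a r) := (measurable_gammaPDFReal a r).ennreal_ofReal
  rw [gammaMeasure_eq_withDensity_Ioi,
    integral_withDensity_eq_integral_toReal_smul hpdf (by simp [gammaPDF])]
  refine setIntegral_congr_fun measurableSet_Ioi fun t ht => ?_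
  rw [gammaPDF, ENNReal.toReal_ofReal (gammaPDFReal_nonneg ha hr t), gammaPDFReal,
    if_pos (mem_Ioi.1 ht).le]

lemma mgf_id_gammaMeasure {a r x : ℝ} (ha : 0 < a) (hr : 0 < r) (hx : x < r) :
    mgf id (gammaMeasure a r) x = (r / (r - x)) ^ a := by
  have hΓ := (Real.Gamma_pos_of_pos ha).ne'
  have hrx : 0 < r - x := sub_pos.2 hx
  have hker : ∀ t : ℝ, (r ^ a / Real.Gamma a * t ^ (a - 1) * Real.exp (-(r * t)))
        • Real.exp (x * id t)
      = r ^ a / Real.Gamma a * (t ^ (a - 1) * Real.exp (-((r - x) * t))) := fun t => by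
    rw [smul_eq_mul, mul_assoc, mul_assoc, ← Real.exp_add, id]
    ring_nf
  rw [mgf, integral_gammaMeasure ha hr]
  simp_rw [hker]
  rw [integral_const_mul, Real.integral_rpow_mul_exp_neg_mul_Ioi ha hrx,
    Real.div_rpow hr.le hrx.le, Real.div_rpow zero_le_one hrx.le, Real.one_rpow]
  field_simp

lemma Iio_subset_integrableExpSet_gammaMeasure {a r : ℝ} (ha : 0 < a) (hr : 0 < r) :
    Iio r ⊆ integrableExpSet id (gammaMeasure a r) := fun x hx => by
  refine Integrable.of_integral_ne_zero ?_
  change mgf id (gammaMeasure a r) x ≠ 0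
  rw [mgf_id_gammaMeasure ha hr hx]
  exact (Real.rpow_pos_of_pos (div_pos hr (sub_pos.2 hx)) a).ne'

lemma integrable_id_gammaMeasure {a r : ℝ} (ha : 0 < a) (hr : 0 < r) :
    Integrable id (gammaMeasure a r) := by
  refine memLp_one_iff_integrable.1 (mod_cast memLp_of_mem_interior_integrableExpSet
    (X := id) (μ := gammaMeasure a r) ?_ 1)
  exact interior_maximal (Iio_subset_integrableExpSet_gammaMeasure ha hr) isOpen_Iio hr

/-- The bump `(1 + x²)^(-p)`. It is positive definite, comparable to an indicator near `0`, and
has a polynomial tail, which is what makes it an almost-eigenfunction of Lévy generators with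
polynomial jump tails. -/
def bump (p x : ℝ) : ℝ := (1 + x ^ 2) ^ (-p)

/-- The symmetric variance-gamma law of shape `p`: a centred Gaussian whose variance is twice a
`Gamma(p, 1)` variable. Its characteristic function is `bump p`. -/
def varianceGamma (p : ℝ) : Measure ℝ :=
  ((gammaMeasure p 1).prod (gaussianReal 0 1)).map fun z => √(2 * z.1) * z.2

lemma isProbabilityMeasure_varianceGamma {p : ℝ} (hp : 0 < p) :
    IsProbabilityMeasure (varianceGamma p) := by
  have := isProbabilityMeasure_gammaMeasure hp one_pos
  exact Measure.isProbabilityMeasure_map (by fun_prop)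

lemma memLp_two_varianceGamma {p : ℝ} (hp : 0 < p) : MemLp id 2 (varianceGamma p) := by
  have := isProbabilityMeasure_gammaMeasure hp one_pos
  rw [memLp_two_iff_integrable_sq measurable_id.aestronglyMeasurable, varianceGamma,
    integrable_map_measure (by fun_prop) (by fun_prop)]
  have hprod := ((integrable_id_gammaMeasure hp one_pos).const_mul 2).mul_prod
    (memLp_id_gaussianReal (μ := 0) (v := 1) 2).integrable_sq
  refine hprod.congr ?_
  filter_upwards [Measure.quasiMeasurePreserving_fst.ae (ae_pos_gammaMeasure p 1)] with z hz
  simp only [id, Function.comp_apply]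
  rw [mul_pow, Real.sq_sqrt (by positivity)]

lemma charFun_varianceGamma {p : ℝ} (hp : 0 < p) (x : ℝ) :
    charFun (varianceGamma p) x = bump p x := by
  have := isProbabilityMeasure_gammaMeasure hp one_pos
  have hgauss : ∀ t : ℝ, 0 < t →
      ∫ n, Complex.exp (x * (√(2 * t) * n : ℝ) * Complex.I) ∂(gaussianReal 0 1)
        = (Real.exp (-x ^ 2 * t) : ℂ) := fun t ht => by
    have h := charFun_gaussianReal (μ := 0) (v := 1) (x * √(2 * t))
    rw [charFun_apply_real] at h
    have hsq : ((√(2 * t) : ℝ) : ℂ) ^ 2 = 2 * t := by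
      rw [← Complex.ofReal_pow, Real.sq_sqrt (by positivity)]
      push_cast
      rfl
    calc _ = ∫ n : ℝ, Complex.exp ((x * √(2 * t) : ℝ) * n * Complex.I) ∂(gaussianReal 0 1) := by
          simp only [Complex.ofReal_mul, mul_assoc]
      _ = _ := by
          rw [h]
          push_cast
          rw [mul_pow, hsq]
          ring_nf
  have hlaplace := mgf_id_gammaMeasure hp one_pos (by nlinarith : -x ^ 2 < 1)
  rw [charFun_apply_real, varianceGamma, integral_map (by fun_prop) (by fun_prop), integral_prod]
  · calc _ = ∫ t, (Real.exp (-x ^ 2 * t) : ℂ) ∂(gammaMeasure p 1) :=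
          integral_congr_ae ((ae_pos_gammaMeasure p 1).mono hgauss)
      _ = ((mgf id (gammaMeasure p 1) (-x ^ 2) : ℝ) : ℂ) := integral_complex_ofReal
      _ = bump p x := by
          rw [hlaplace, bump, sub_neg_eq_add, one_div, Real.inv_rpow (by positivity),
            Real.rpow_neg (by positivity)]
  · refine Integrable.of_bound (by fun_prop) 1 (ae_of_all _ fun z => ?_)
    rw [← Complex.ofReal_mul, Complex.norm_exp_ofReal_mul_I]

lemma bump_pos (p x : ℝ) : 0 < bump p x := Real.rpow_pos_of_pos (by positivity) _

lemma bump_le_one {p : ℝ} (hp : 0 ≤ p) (x : ℝ) : bump p x ≤ 1 :=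
  Real.rpow_le_one_of_one_le_of_nonpos (by nlinarith) (by linarith)

@[fun_prop]
lemma measurable_bump (p : ℝ) : Measurable (bump p) := by
  unfold bump
  fun_prop

lemma bump_neg (p x : ℝ) : bump p (-x) = bump p x := by rw [bump, neg_sq, bump]

lemma bump_zero (p : ℝ) : bump p 0 = 1 := by simp [bump]

lemma bump_add_one (p x : ℝ) : bump (p + 1) x = bump p x / (1 + x ^ 2) := by
  rw [bump, neg_add', Real.rpow_sub_one (by positivity), bump]

lemma bump_add_one_le (p x : ℝ) : bump (p + 1) x ≤ bump p x := by
  rw [bump_add_one]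
  exact div_le_self (bump_pos p x).le (by nlinarith)

lemma bump_le_mul_bump {p c x z : ℝ} (hp : 0 ≤ p) (hc : 0 < c) (h : 1 + x ^ 2 ≤ c * (1 + z ^ 2)) :
    bump p z ≤ c ^ p * bump p x := by
  have hscale : bump p z = c ^ p * (c * (1 + z ^ 2)) ^ (-p) := by
    rw [Real.mul_rpow hc.le (by positivity), ← mul_assoc, ← Real.rpow_add hc, add_neg_cancel,
      Real.rpow_zero, one_mul, bump]
  rw [hscale]
  gcongr
  exact Real.rpow_le_rpow_of_nonpos (by positivity) h (by linarith)

lemma bump_add_mul_bump_le {p : ℝ} (hp : 0 ≤ p) (x z : ℝ) :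
    bump p (x + z) * bump p z ≤ 4 ^ p * bump p x * (bump p z + bump p (x + z)) := by
  have hz := (bump_pos p z).le
  have hxz := (bump_pos p (x + z)).le
  have hx : 0 ≤ 4 ^ p * bump p x := mul_nonneg (by positivity) (bump_pos p x).le
  rcases le_total ((x + z) ^ 2) (z ^ 2) with h | h
  · have hle : bump p z ≤ 4 ^ p * bump p x :=
      bump_le_mul_bump hp (by norm_num) (by nlinarith [sq_nonneg (x + z + z)])
    nlinarith [mul_le_mul_of_nonneg_left hle hxz, mul_nonneg hx hz]
  · have hle : bump p (x + z) ≤ 4 ^ p * bump p x :=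
      bump_le_mul_bump hp (by norm_num) (by nlinarith [sq_nonneg (x + z + z)])
    nlinarith [mul_le_mul_of_nonneg_right hle hz, mul_nonneg hx hxz]

lemma rpow_abs_le_mul_bump {p z : ℝ} (hp : 0 ≤ p) (hz : 1 ≤ |z|) :
    |z| ^ (-2 * p) ≤ 2 ^ p * bump p z := by
  have hsq : 1 ≤ z ^ 2 := (one_le_sq_iff_one_le_abs z).2 hz
  calc |z| ^ (-2 * p) = (z ^ 2) ^ (-p) := by
        rw [← sq_abs, ← Real.rpow_natCast, ← Real.rpow_mul (abs_nonneg z)]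
        ring_nf
    _ ≤ ((1 + z ^ 2) / 2) ^ (-p) :=
        Real.rpow_le_rpow_of_nonpos (by positivity) (by linarith) (by linarith)
    _ = 2 ^ p * bump p z := by
        rw [Real.div_rpow (by positivity) zero_le_two, Real.rpow_neg zero_le_two, div_inv_eq_mul,
          mul_comm, bump]

lemma bump_le_rpow_abs {p : ℝ} (hp : 0 ≤ p) {x : ℝ} (hx : x ≠ 0) :
    bump p x ≤ |x| ^ (-2 * p) := by
  calc bump p x ≤ (x ^ 2) ^ (-p) :=
        Real.rpow_le_rpow_of_nonpos (by positivity) (by linarith) (by linarith)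
    _ = |x| ^ (-2 * p) := by
        rw [← sq_abs, ← Real.rpow_natCast, ← Real.rpow_mul (abs_nonneg x)]
        ring_nf

lemma integrable_bump {p : ℝ} (hp : 1 / 2 < p) : Integrable (bump p) := by
  have h := integrable_rpow_neg_one_add_norm_sq (E := ℝ) (μ := volume) (r := 2 * p)
    (by rw [Module.finrank_self]; push_cast; linarith)
  refine h.congr (ae_of_all _ fun x => ?_)
  simp only [Real.norm_eq_abs, sq_abs, bump]
  congr 1
  ring

lemma hasDerivAt_bump (p x : ℝ) : HasDerivAt (bump p) (-2 * p * x * bump (p + 1) x) x := by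
  have hbase : HasDerivAt (fun x : ℝ => 1 + x ^ 2) (2 * x) x := by
    simpa using (hasDerivAt_pow 2 x).const_add 1
  refine (hbase.rpow_const (p := -p) (Or.inl (by positivity))).congr_deriv ?_
  rw [bump, neg_add']
  ring

lemma abs_deriv_bump_le {p : ℝ} (hp : 0 ≤ p) (x : ℝ) : |deriv (bump p) x| ≤ p * bump p x := by
  have hx : 2 * |x| ≤ 1 + x ^ 2 := by nlinarith [sq_nonneg (|x| - 1), sq_abs x]
  rw [(hasDerivAt_bump p x).deriv, bump_add_one, abs_mul, abs_mul, abs_mul, abs_neg, abs_two,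
    abs_of_nonneg hp, abs_of_pos (div_pos (bump_pos p x) (by positivity)), ← mul_div_assoc,
    div_le_iff₀ (by positivity)]
  nlinarith [mul_le_mul_of_nonneg_left hx (mul_nonneg hp (bump_pos p x).le)]

lemma hasDerivAt_deriv_bump (p x : ℝ) :
    HasDerivAt (deriv (bump p))
      (-2 * p * bump (p + 1) x + 4 * p * (p + 1) * x ^ 2 * bump (p + 2) x) x := by
  have hderiv : deriv (bump p) = fun x => -2 * p * x * bump (p + 1) x :=
    funext fun x => (hasDerivAt_bump p x).deriv
  rw [hderiv]
  refine (((hasDerivAt_id x).const_mul (-2 * p)).mul (hasDerivAt_bump (p + 1) x)).congr_deriv ?_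
  rw [id, add_assoc p 1 1, one_add_one_eq_two]
  ring

lemma abs_deriv_deriv_bump_le {p : ℝ} (hp : 0 ≤ p) (x : ℝ) :
    |deriv (deriv (bump p)) x| ≤ 2 * p * (2 * p + 3) * bump p x := by
  have hfirst := bump_add_one_le p x
  have hsecond : x ^ 2 * bump (p + 2) x ≤ bump p x := by
    have h : x ^ 2 * bump (p + 2) x = x ^ 2 / (1 + x ^ 2) * bump (p + 1) x := by
      rw [show p + 2 = p + 1 + 1 by ring, bump_add_one (p + 1)]
      ring
    rw [h]
    refine (mul_le_of_le_one_left (bump_pos _ x).le ?_).trans hfirst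
    exact (div_le_one (by positivity)).2 (by linarith)
  rw [(hasDerivAt_deriv_bump p x).deriv]
  calc |-2 * p * bump (p + 1) x + 4 * p * (p + 1) * x ^ 2 * bump (p + 2) x|
      ≤ |-2 * p * bump (p + 1) x| + |4 * p * (p + 1) * x ^ 2 * bump (p + 2) x| := abs_add_le _ _
    _ = 2 * p * bump (p + 1) x + 4 * p * (p + 1) * (x ^ 2 * bump (p + 2) x) := by
        have h₁ := bump_pos (p + 1) x
        have h₂ := bump_pos (p + 2) x
        rw [neg_mul, neg_mul, abs_neg, abs_of_nonneg (by positivity),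
          abs_of_nonneg (by positivity), mul_assoc (4 * p * (p + 1))]
    _ ≤ 2 * p * bump p x + 4 * p * (p + 1) * bump p x := by gcongr
    _ = 2 * p * (2 * p + 3) * bump p x := by ring

lemma abs_sub_sub_mul_deriv_le {f : ℝ → ℝ} (hf : Differentiable ℝ f)
    (hf' : Differentiable ℝ (deriv f)) {x z B : ℝ}
    (hB : ∀ w, |w - x| ≤ |z| → |deriv (deriv f) w| ≤ B) :
    |f (x + z) - f x - z * deriv f x| ≤ B * z ^ 2 := by
  have hmem : ∀ w ∈ Metric.closedBall x |z|, |w - x| ≤ |z| := fun w hw => hw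
  have hx : x ∈ Metric.closedBall x |z| := Metric.mem_closedBall_self (abs_nonneg z)
  have hB0 : 0 ≤ B := (abs_nonneg _).trans (hB x (by simp))
  have hconv : Convex ℝ (Metric.closedBall x |z|) := convex_closedBall _ _
  have hslope : ∀ w ∈ Metric.closedBall x |z|, ‖deriv f w - deriv f x‖ ≤ B * |z| := fun w hw =>
    (hconv.norm_image_sub_le_of_norm_deriv_le (fun w _ => hf' w)
      (fun w hw => hB w (hmem w hw)) hx hw).trans (by gcongr; exact hmem w hw)
  have hg : ∀ w, HasDerivAt (fun w => f w - w * deriv f x) (deriv f w - deriv f x) w := fun w =>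
    (hf w).hasDerivAt.sub (by simpa using (hasDerivAt_id w).mul_const (deriv f x))
  have h := hconv.norm_image_sub_le_of_norm_hasDerivWithin_le
    (fun w _ => (hg w).hasDerivWithinAt) hslope hx
    (show x + z ∈ Metric.closedBall x |z| by simp)
  simp only [Real.norm_eq_abs, add_sub_cancel_left] at h
  calc |f (x + z) - f x - z * deriv f x|
      = |f (x + z) - (x + z) * deriv f x - (f x - x * deriv f x)| := by ring_nf
    _ ≤ B * |z| * |z| := h
    _ = B * z ^ 2 := by rw [mul_assoc, ← sq, sq_abs]

lemma abs_bump_sub_sub_le {p : ℝ} (hp : 0 ≤ p) {x z : ℝ} (hz : |z| ≤ 1) :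
    |bump p (x + z) - bump p x - z * deriv (bump p) x|
      ≤ 2 * p * (2 * p + 3) * 3 ^ p * bump p x * z ^ 2 := by
  refine abs_sub_sub_mul_deriv_le (fun w => (hasDerivAt_bump p w).differentiableAt)
    (fun w => (hasDerivAt_deriv_bump p w).differentiableAt) fun w hw => ?_
  have hdist : (w - x) ^ 2 ≤ 1 := (sq_le_one_iff_abs_le_one _).2 (hw.trans hz)
  refine (abs_deriv_deriv_bump_le hp w).trans ?_
  rw [mul_assoc _ (3 ^ p)]
  gcongr
  exact bump_le_mul_bump hp (by norm_num) (by nlinarith [sq_nonneg (w + (w - x))])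

/-! ### Lévy exponents and generators -/

/-- The integrand of the Lévy–Khintchine formula, with jumps compensated on `[-1, 1]`. -/
def levyKernel (u y : ℝ) : ℂ :=
  Complex.exp (Complex.I * u * y) - 1 - (if |y| ≤ 1 then Complex.I * u * y else 0)

/-- The Lévy exponent of a Lévy process with drift `b`, Lévy measure `ν` and no Gaussian part. -/
def levyExponent (b : ℝ) (ν : Measure ℝ) (u : ℝ) : ℂ :=
  Complex.I * b * u + ∫ y, levyKernel u y ∂ν

/-- The generator of a Lévy process with drift `b`, Lévy measure `ν` and no Gaussian part, for both
real and complex valued functions: the former are estimated, the latter include characters. -/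
def levyGenerator {E : Type*} [NormedAddCommGroup E] [NormedSpace ℝ E] (b : ℝ) (ν : Measure ℝ)
    (f : ℝ → E) (x : ℝ) : E :=
  b • deriv f x + ∫ y, (f (x + y) - f x - (if |y| ≤ 1 then y • deriv f x else 0)) ∂ν

lemma norm_exp_ofReal_mul_ofReal_mul_I (x v : ℝ) : ‖Complex.exp (x * v * Complex.I)‖ = 1 := by
  rw [← Complex.ofReal_mul, Complex.norm_exp_ofReal_mul_I]

lemma integrable_mul_exp_mul_I {m : Measure ℝ} {φ : ℝ → ℂ} (hφ : Integrable φ m) (x : ℝ) :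
    Integrable (fun v : ℝ => φ v * Complex.exp (x * v * Complex.I)) m :=
  hφ.mul_bdd (c := 1) (by fun_prop) (ae_of_all _ fun v => (norm_exp_ofReal_mul_ofReal_mul_I x v).le)

lemma integrable_exp_mul_I (m : Measure ℝ) [IsFiniteMeasure m] (x : ℝ) :
    Integrable (fun v : ℝ => Complex.exp (x * v * Complex.I)) m :=
  Integrable.of_bound (by fun_prop) 1
    (ae_of_all _ fun v => (norm_exp_ofReal_mul_ofReal_mul_I x v).le)

lemma hasDerivAt_charFun {m : Measure ℝ} [IsFiniteMeasure m] (hm : Integrable id m) (x : ℝ) :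
    HasDerivAt (charFun m) (∫ v : ℝ, Complex.I * v * Complex.exp (x * v * Complex.I) ∂m) x := by
  have hm' : MemLp id (1 : ℕ) m := mod_cast memLp_one_iff_integrable.2 hm
  have hderiv := iteratedDeriv_charFun hm' (t := x)
  simp only [iteratedDeriv_one, pow_one] at hderiv
  refine ((contDiff_charFun hm').differentiable (by simp) x).hasDerivAt.congr_deriv ?_
  rw [hderiv, ← integral_const_mul]
  simp only [mul_assoc]

@[fun_prop]
lemma measurable_levyKernel : Measurable fun z : ℝ × ℝ => levyKernel z.1 z.2 := by
  unfold levyKernel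
  refine Measurable.sub (by fun_prop) (Measurable.ite ?_ (by fun_prop) measurable_const)
  exact measurableSet_le (by fun_prop) measurable_const

lemma norm_levyKernel_le (u y : ℝ) : ‖levyKernel u y‖ ≤ 3 * (1 + u ^ 2) * min 1 (y ^ 2) := by
  have hexp : ‖Complex.exp (Complex.I * u * y) - 1‖ ≤ 2 := by
    refine (norm_sub_le _ _).trans_eq ?_
    rw [mul_assoc, ← Complex.ofReal_mul, Complex.norm_exp_I_mul_ofReal, norm_one,
      one_add_one_eq_two]
  have hlin : ‖Complex.I * u * y‖ = |u * y| := by simp [abs_mul]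
  have hprod : |u * y| ^ 2 = u ^ 2 * y ^ 2 := by rw [sq_abs, mul_pow]
  unfold levyKernel
  split_ifs with hy
  · rw [min_eq_right ((sq_le_one_iff_abs_le_one y).2 hy)]
    rcases le_or_gt |u * y| 1 with huy | huy
    · have h := Complex.norm_exp_sub_one_sub_id_le (hlin.trans_le huy)
      rw [hlin, hprod] at h
      nlinarith [sq_nonneg y, mul_nonneg (sq_nonneg u) (sq_nonneg y)]
    · have h := (norm_sub_le _ (Complex.I * u * y)).trans (add_le_add_left hexp _)
      rw [hlin] at h
      nlinarith [sq_nonneg y, mul_nonneg (sq_nonneg u) (sq_nonneg y)]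
  · rw [sub_zero, min_eq_left ((one_lt_sq_iff_one_lt_abs y).2 (not_le.1 hy)).le]
    nlinarith [sq_nonneg u]

section LevyMeasure

variable {b : ℝ} {ν : Measure ℝ} {m : Measure ℝ} [IsFiniteMeasure m]

@[fun_prop]
lemma measurable_levyExponent [SFinite ν] : Measurable (levyExponent b ν) := by
  refine Measurable.add (by fun_prop) ?_
  exact (measurable_levyKernel.stronglyMeasurable.integral_prod_right).measurable

lemma norm_levyExponent_le (hν : Integrable (fun y => min 1 (y ^ 2)) ν) (u : ℝ) :
    ‖levyExponent b ν u‖ ≤ (|b| + 3 * ∫ y, min 1 (y ^ 2) ∂ν) * (1 + u ^ 2) := by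
  have hdrift : ‖Complex.I * b * u‖ ≤ |b| * (1 + u ^ 2) := by
    simp only [norm_mul, Complex.norm_I, one_mul, Complex.norm_real, Real.norm_eq_abs]
    gcongr
    nlinarith [sq_nonneg (|u| - 1), sq_abs u]
  have hjump : ‖∫ y, levyKernel u y ∂ν‖ ≤ 3 * (1 + u ^ 2) * ∫ y, min 1 (y ^ 2) ∂ν := by
    rw [← integral_const_mul]
    exact norm_integral_le_of_norm_le (hν.const_mul _) (ae_of_all _ (norm_levyKernel_le u))
  calc _ ≤ _ := norm_add_le _ _
    _ ≤ _ := add_le_add hdrift hjump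
    _ = _ := by ring

lemma integrable_levyExponent [SFinite ν] (hν : Integrable (fun y => min 1 (y ^ 2)) ν)
    (hm : MemLp id 2 m) :
    Integrable (levyExponent b ν) m := by
  have hsq : Integrable (fun v : ℝ => 1 + v ^ 2) m := (integrable_const 1).add hm.integrable_sq
  exact (hsq.const_mul _).mono' measurable_levyExponent.aestronglyMeasurable
    (ae_of_all _ (norm_levyExponent_le hν))

lemma integral_levyKernel_mul_exp (hm : Integrable id m) (x y : ℝ) :
    ∫ v : ℝ, levyKernel v y * Complex.exp (x * v * Complex.I) ∂m
      = charFun m (x + y) - charFun m x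
        - (if |y| ≤ 1 then y • deriv (charFun m) x else 0) := by
  have hIv : Integrable (fun v : ℝ => Complex.I * v * Complex.exp (x * v * Complex.I)) m :=
    integrable_mul_exp_mul_I (hm.ofReal.const_mul _) x
  have hker : ∀ v : ℝ, levyKernel v y * Complex.exp (x * v * Complex.I)
      = Complex.exp ((x + y : ℝ) * v * Complex.I) - Complex.exp (x * v * Complex.I)
        - (if |y| ≤ 1 then (y : ℂ) else 0) * (Complex.I * v * Complex.exp (x * v * Complex.I)) :=
    fun v => by
      have hadd : Complex.exp ((x + y : ℝ) * v * Complex.I)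
          = Complex.exp (Complex.I * v * y) * Complex.exp (x * v * Complex.I) := by
        rw [← Complex.exp_add]
        push_cast
        ring_nf
      rw [hadd, levyKernel]
      split_ifs <;> ring
  have hdiff : Integrable (fun v : ℝ => Complex.exp ((x + y : ℝ) * v * Complex.I)
      - Complex.exp (x * v * Complex.I)) m :=
    (integrable_exp_mul_I m _).sub (integrable_exp_mul_I m x)
  simp_rw [hker]
  rw [integral_sub hdiff (hIv.const_mul _),
    integral_sub (integrable_exp_mul_I m _) (integrable_exp_mul_I m x), integral_const_mul,
    ← charFun_apply_real, ← charFun_apply_real, (hasDerivAt_charFun hm x).deriv]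
  split_ifs <;> simp

lemma levyGenerator_charFun [SFinite ν] (hν : Integrable (fun y => min 1 (y ^ 2)) ν)
    (hm : MemLp id 2 m) (x : ℝ) :
    levyGenerator b ν (charFun m) x
      = ∫ v, levyExponent b ν v * Complex.exp (x * v * Complex.I) ∂m := by
  have hm1 : Integrable id m := hm.integrable one_le_two
  have hsq : Integrable (fun v : ℝ => 3 * (1 + v ^ 2)) m :=
    ((integrable_const 1).add hm.integrable_sq).const_mul 3
  have hIv : Integrable (fun v : ℝ => Complex.I * v * Complex.exp (x * v * Complex.I)) m :=
    integrable_mul_exp_mul_I (hm1.ofReal.const_mul _) x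
  have hprod : Integrable
      (fun z : ℝ × ℝ => levyKernel z.1 z.2 * Complex.exp (x * z.1 * Complex.I)) (m.prod ν) := by
    refine (hsq.mul_prod hν).mono' (by fun_prop) (ae_of_all _ fun z => ?_)
    rw [norm_mul, norm_exp_ofReal_mul_ofReal_mul_I, mul_one]
    exact norm_levyKernel_le _ _
  have hψ : ∀ v : ℝ, levyExponent b ν v * Complex.exp (x * v * Complex.I)
      = b * (Complex.I * v * Complex.exp (x * v * Complex.I))
        + ∫ y, levyKernel v y * Complex.exp (x * v * Complex.I) ∂ν := fun v => by
    rw [integral_mul_const, levyExponent]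
    ring
  simp_rw [hψ]
  rw [integral_add (hIv.const_mul _) hprod.integral_prod_left, integral_const_mul,
    ← (hasDerivAt_charFun hm1 x).deriv, integral_integral_swap hprod]
  simp_rw [integral_levyKernel_mul_exp hm1]
  rw [levyGenerator, Complex.real_smul]

end LevyMeasure

lemma levyGenerator_ofReal (b : ℝ) (ν : Measure ℝ) {f : ℝ → ℝ} (hf : Differentiable ℝ f) (x : ℝ) :
    levyGenerator b ν (fun x => (f x : ℂ)) x = levyGenerator b ν f x := by
  have hderiv : deriv (fun x => (f x : ℂ)) x = deriv f x := (hf x).hasDerivAt.ofReal_comp.deriv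
  rw [levyGenerator, levyGenerator, hderiv, Complex.ofReal_add, ← integral_complex_ofReal,
    smul_eq_mul, Complex.real_smul, Complex.ofReal_mul]
  congr 2 with y
  split_ifs <;> simp

lemma integral_integral_mul_exp_mul_I {m μ : Measure ℝ} [IsFiniteMeasure m] [IsFiniteMeasure μ]
    {φ : ℝ → ℂ} (hφ : Integrable φ m) (x : ℝ) :
    ∫ y, ∫ v, φ v * Complex.exp ((x + y : ℝ) * v * Complex.I) ∂m ∂μ
      = ∫ v, φ v * Complex.exp (x * v * Complex.I) * charFun μ v ∂m := by
  have hprod : Integrable (fun z : ℝ × ℝ => φ z.2 * Complex.exp ((x + z.1 : ℝ) * z.2 * Complex.I))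
      (μ.prod m) :=
    (hφ.comp_snd μ).mul_bdd (c := 1) (by fun_prop)
      (ae_of_all _ fun z => (norm_exp_ofReal_mul_ofReal_mul_I _ _).le)
  rw [integral_integral_swap hprod]
  refine integral_congr_ae (ae_of_all _ fun v => ?_)
  simp only
  rw [charFun_apply_real, ← integral_const_mul]
  refine integral_congr_ae (ae_of_all _ fun y => ?_)
  simp only
  rw [mul_assoc (φ v), ← Complex.exp_add]
  push_cast
  ring_nf

/-- `μ` assigns to each time `t > 0` a law with characteristic function `e^{tψ}`; no joint law of
the marginals is prescribed. -/
structure HasLevyExponent (μ : ℝ → Measure ℝ) (ψ : ℝ → ℂ) : Prop where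
  isProbabilityMeasure : ∀ t, 0 < t → IsProbabilityMeasure (μ t)
  charFun_eq : ∀ t, 0 < t → ∀ u, charFun (μ t) u = Complex.exp (t * ψ u)

namespace HasLevyExponent

lemma norm_exp_le_one {μ : ℝ → Measure ℝ} {ψ : ℝ → ℂ} (hμ : HasLevyExponent μ ψ) {t : ℝ}
    (ht : 0 < t) (u : ℝ) : ‖Complex.exp (t * ψ u)‖ ≤ 1 := by
  have := hμ.isProbabilityMeasure t ht
  rw [← hμ.charFun_eq t ht]
  exact norm_charFun_le_one u

variable {μ : ℝ → Measure ℝ} {b : ℝ} {ν m : Measure ℝ} [IsFiniteMeasure m]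

lemma integral_charFun (hμ : HasLevyExponent μ (levyExponent b ν)) {t : ℝ} (ht : 0 < t) (x : ℝ) :
    ∫ y, charFun m (x + y) ∂(μ t)
      = ∫ v, Complex.exp (x * v * Complex.I) * Complex.exp (t * levyExponent b ν v) ∂m := by
  have := hμ.isProbabilityMeasure t ht
  have h := integral_integral_mul_exp_mul_I (μ := μ t) (integrable_const (μ := m) (1 : ℂ)) x
  simpa only [one_mul, ← charFun_apply_real, hμ.charFun_eq t ht] using h

/-- Kolmogorov's forward equation, tested against a characteristic function. -/
lemma hasDerivAt_integral_charFun [SFinite ν] (hμ : HasLevyExponent μ (levyExponent b ν))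
    (hν : Integrable (fun y => min 1 (y ^ 2)) ν) (hm : MemLp id 2 m) {t : ℝ} (ht : 0 < t) (x : ℝ) :
    HasDerivAt (fun t => ∫ y, charFun m (x + y) ∂(μ t))
      (∫ y, levyGenerator b ν (charFun m) (x + y) ∂(μ t)) t := by
  have := hμ.isProbabilityMeasure t ht
  have hψ : Integrable (levyExponent b ν) m := integrable_levyExponent hν hm
  have hexp : ∀ v (t : ℝ), HasDerivAt (fun t : ℝ => Complex.exp (t * levyExponent b ν v))
      (levyExponent b ν v * Complex.exp (t * levyExponent b ν v)) t := fun v t => by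
    have h := (Complex.ofRealCLM.hasDerivAt (x := t)).mul_const (levyExponent b ν v)
    simpa [mul_comm] using h.cexp
  have hderiv : HasDerivAt
      (fun t : ℝ => ∫ v, Complex.exp (x * v * Complex.I) * Complex.exp (t * levyExponent b ν v) ∂m)
      (∫ v, Complex.exp (x * v * Complex.I)
        * (levyExponent b ν v * Complex.exp (t * levyExponent b ν v)) ∂m) t := by
    refine (hasDerivAt_integral_of_dominated_loc_of_deriv_le (s := Ioi 0)
      (F := fun (t : ℝ) v => Complex.exp (x * v * Complex.I) * Complex.exp (t * levyExponent b ν v))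
      (F' := fun (t : ℝ) v => Complex.exp (x * v * Complex.I)
        * (levyExponent b ν v * Complex.exp (t * levyExponent b ν v)))
      (bound := fun v => ‖levyExponent b ν v‖) (Ioi_mem_nhds ht)
      (Eventually.of_forall fun t => by fun_prop) ?_ (by fun_prop) ?_ hψ.norm ?_).2
    · refine Integrable.of_bound (by fun_prop) 1 (ae_of_all _ fun v => ?_)
      rw [norm_mul, norm_exp_ofReal_mul_ofReal_mul_I, one_mul]
      exact hμ.norm_exp_le_one ht v
    · refine ae_of_all _ fun v s hs => ?_
      rw [norm_mul, norm_exp_ofReal_mul_ofReal_mul_I, one_mul, norm_mul]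
      exact mul_le_of_le_one_right (norm_nonneg _) (hμ.norm_exp_le_one hs v)
    · exact ae_of_all _ fun v s _ => (hexp v s).const_mul _
  have hgen : ∫ y, levyGenerator b ν (charFun m) (x + y) ∂(μ t)
      = ∫ v, Complex.exp (x * v * Complex.I)
        * (levyExponent b ν v * Complex.exp (t * levyExponent b ν v)) ∂m := by
    simp_rw [levyGenerator_charFun hν hm]
    rw [integral_integral_mul_exp_mul_I hψ]
    simp_rw [hμ.charFun_eq t ht, mul_comm (levyExponent b ν _) (Complex.exp (x * _ * _)), mul_assoc]
  rw [hgen]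
  refine hderiv.congr_of_eventuallyEq ?_
  filter_upwards [Ioi_mem_nhds ht] with s hs
  exact hμ.integral_charFun hs x

lemma tendsto_integral_charFun [SFinite ν] (hμ : HasLevyExponent μ (levyExponent b ν))
    (x : ℝ) :
    Tendsto (fun t => ∫ y, charFun m (x + y) ∂(μ t)) (𝓝[>] 0) (𝓝 (charFun m x)) := by
  have hlim : Tendsto
      (fun t : ℝ => ∫ v, Complex.exp (x * v * Complex.I) * Complex.exp (t * levyExponent b ν v) ∂m)
      (𝓝[>] 0) (𝓝 (∫ v : ℝ, Complex.exp (x * v * Complex.I) ∂m)) := by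
    refine tendsto_integral_filter_of_dominated_convergence (fun _ => 1)
      (Eventually.of_forall fun t => by fun_prop) ?_ (integrable_const 1) (ae_of_all _ fun v => ?_)
    · filter_upwards [self_mem_nhdsWithin] with t ht
      refine ae_of_all _ fun v => ?_
      rw [norm_mul, norm_exp_ofReal_mul_ofReal_mul_I, one_mul]
      exact hμ.norm_exp_le_one ht v
    · have hcont : Continuous fun t : ℝ =>
          Complex.exp (x * v * Complex.I) * Complex.exp (t * levyExponent b ν v) := by fun_prop
      simpa using (hcont.tendsto 0).mono_left nhdsWithin_le_nhds
  rw [charFun_apply_real]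
  refine hlim.congr' ?_
  filter_upwards [self_mem_nhdsWithin] with t ht
  exact (hμ.integral_charFun ht x).symm

end HasLevyExponent

lemma le_exp_mul_of_hasDerivAt_le {u u' : ℝ → ℝ} {A u₀ t : ℝ}
    (hu : ∀ t, 0 < t → HasDerivAt u (u' t) t) (hle : ∀ t, 0 < t → u' t ≤ A * u t)
    (h₀ : Tendsto u (𝓝[>] 0) (𝓝 u₀)) (ht : 0 < t) : u t ≤ Real.exp (A * t) * u₀ := by
  have hv : ∀ s, 0 < s → HasDerivAt (fun s => Real.exp (-A * s) * u s)
      (Real.exp (-A * s) * (u' s - A * u s)) s := fun s hs => by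
    have hexp : HasDerivAt (fun s => Real.exp (-A * s)) (Real.exp (-A * s) * -A) s := by
      simpa using ((hasDerivAt_id s).const_mul (-A)).exp
    exact (hexp.mul (hu s hs)).congr_deriv (by ring)
  have hanti : AntitoneOn (fun s => Real.exp (-A * s) * u s) (Ioi 0) := by
    refine antitoneOn_of_hasDerivWithinAt_nonpos (convex_Ioi 0)
      (fun s hs => (hv s hs).continuousAt.continuousWithinAt)
      (fun s hs => (hv s (interior_subset hs)).hasDerivWithinAt) fun s hs => ?_
    exact mul_nonpos_of_nonneg_of_nonpos (Real.exp_pos _).le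
      (sub_nonpos.2 (hle s (interior_subset hs)))
  have hlim : Tendsto (fun s => Real.exp (-A * s) * u s) (𝓝[>] 0) (𝓝 u₀) := by
    have hexp : Tendsto (fun s => Real.exp (-A * s)) (𝓝[>] 0) (𝓝 1) := by
      have h : Continuous fun s => Real.exp (-A * s) := by fun_prop
      simpa using (h.tendsto 0).mono_left nhdsWithin_le_nhds
    simpa using hexp.mul h₀
  have hmain : Real.exp (-A * t) * u t ≤ u₀ := by
    refine ge_of_tendsto hlim ?_
    filter_upwards [Ioo_mem_nhdsGT ht] with s hs
    exact hanti hs.1 ht hs.2.le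
  calc u t = Real.exp (A * t) * (Real.exp (-A * t) * u t) := by
        rw [← mul_assoc, ← Real.exp_add]
        simp
    _ ≤ Real.exp (A * t) * u₀ := by gcongr

namespace HasLevyExponent

variable {μ : ℝ → Measure ℝ} {b : ℝ} {ν m : Measure ℝ} [SFinite ν] [IsProbabilityMeasure m]

theorem integral_mem_Icc_of_abs_levyGenerator_le (hμ : HasLevyExponent μ (levyExponent b ν))
    (hν : Integrable (fun y => min 1 (y ^ 2)) ν) (hm : MemLp id 2 m) {f : ℝ → ℝ}
    (hf : ∀ x, charFun m x = f x) {A : ℝ} (hA : ∀ x, |levyGenerator b ν f x| ≤ A * f x)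
    {t : ℝ} (ht : 0 < t) (x : ℝ) :
    ∫ y, f (x + y) ∂(μ t) ∈ Icc (Real.exp (-(A * t)) * f x) (Real.exp (A * t) * f x) := by
  have hfre : f = fun x => (charFun m x).re := funext fun x => by rw [hf, Complex.ofReal_re]
  have hcharFun : charFun m = fun x => (f x : ℂ) := funext hf
  have hdiff : Differentiable ℝ f := by
    have h := (contDiff_charFun (n := 2) (mod_cast hm)).differentiable (by simp)
    rw [hfre]
    exact fun x => Complex.reCLM.differentiableAt.comp x (h x)
  have hderiv : ∀ t, 0 < t → HasDerivAt (fun t => ∫ y, f (x + y) ∂(μ t))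
      (∫ y, levyGenerator b ν f (x + y) ∂(μ t)) t := fun t ht => by
    have h := hμ.hasDerivAt_integral_charFun hν hm ht x
    simp only [hcharFun, levyGenerator_ofReal b ν hdiff, integral_complex_ofReal] at h
    exact Complex.reCLM.hasFDerivAt.comp_hasDerivAt t h
  have hlim : Tendsto (fun t => ∫ y, f (x + y) ∂(μ t)) (𝓝[>] 0) (𝓝 (f x)) := by
    have h := hμ.tendsto_integral_charFun (m := m) x
    simp only [hcharFun, integral_complex_ofReal] at h
    exact (Complex.continuous_re.tendsto _).comp h
  have hbound : ∀ t, 0 < t →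
      |∫ y, levyGenerator b ν f (x + y) ∂(μ t)| ≤ A * ∫ y, f (x + y) ∂(μ t) := fun t ht => by
    have := hμ.isProbabilityMeasure t ht
    have hint : Integrable (fun y => f (x + y)) (μ t) := by
      refine Integrable.of_bound (by have := hdiff.continuous; fun_prop) 1 (ae_of_all _ fun y => ?_)
      rw [← Complex.norm_real, ← hf]
      exact norm_charFun_le_one _
    rw [← integral_const_mul]
    exact norm_integral_le_of_norm_le (f := fun y => levyGenerator b ν f (x + y))
      (hint.const_mul A) (ae_of_all _ fun y => hA (x + y))
  have hupper := le_exp_mul_of_hasDerivAt_le hderiv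
    (fun t ht => (abs_le.1 (hbound t ht)).2) hlim ht
  have hlower := le_exp_mul_of_hasDerivAt_le (A := -A) (fun t ht => (hderiv t ht).neg)
    (fun t ht => by have := (abs_le.1 (hbound t ht)).1; simp only [Pi.neg_apply]; linarith)
    hlim.neg ht
  simp only [Pi.neg_apply, neg_mul, mul_neg] at hlower
  exact ⟨by linarith, hupper⟩

end HasLevyExponent

/-! ### Generators of stable-like processes -/

/-- The jump measure `|y|^(-1-Y) dy` of the symmetric `Y`-stable process. -/
def stableMeasure (Y : ℝ) : Measure ℝ :=
  volume.withDensity fun y => ENNReal.ofReal (|y| ^ (-1 - Y))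

lemma integrable_stableMeasure_iff {Y : ℝ} {f : ℝ → ℝ} :
    Integrable f (stableMeasure Y) ↔ Integrable fun y => |y| ^ (-1 - Y) * f y := by
  rw [stableMeasure, integrable_withDensity_iff_integrable_smul' (by fun_prop) (by simp)]
  refine integrable_congr (ae_of_all _ fun y => ?_)
  simp only [ENNReal.toReal_ofReal (Real.rpow_nonneg (abs_nonneg y) _), smul_eq_mul]

lemma integral_stableMeasure (Y : ℝ) (f : ℝ → ℝ) :
    ∫ y, f y ∂(stableMeasure Y) = ∫ y, |y| ^ (-1 - Y) * f y := by
  rw [stableMeasure, integral_withDensity_eq_integral_toReal_smul (by fun_prop) (by simp)]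
  simp only [ENNReal.toReal_ofReal (Real.rpow_nonneg (abs_nonneg _) _), smul_eq_mul]

lemma rpow_abs_mul_comp_div {s : ℝ} (hs : 0 < s) (r : ℝ) (f : ℝ → ℝ) (y : ℝ) :
    |y| ^ r * f (y / s) = s ^ r * (|y / s| ^ r * f (y / s)) := by
  rw [← mul_assoc, ← Real.mul_rpow hs.le (abs_nonneg _), abs_div, abs_of_pos hs,
    mul_div_cancel₀ _ hs.ne']

lemma integrable_comp_div_stableMeasure {Y s : ℝ} (hs : 0 < s) {f : ℝ → ℝ}
    (hf : Integrable f (stableMeasure Y)) : Integrable (fun y => f (y / s)) (stableMeasure Y) := by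
  rw [integrable_stableMeasure_iff] at hf ⊢
  simp_rw [rpow_abs_mul_comp_div hs (-1 - Y) f]
  exact (hf.comp_div hs.ne').const_mul _

lemma integral_comp_div_stableMeasure {s : ℝ} (hs : 0 < s) (Y : ℝ) (f : ℝ → ℝ) :
    ∫ y, f (y / s) ∂(stableMeasure Y) = s ^ (-Y) * ∫ y, f y ∂(stableMeasure Y) := by
  have hpow : s ^ (-1 - Y) * s = s ^ (-Y) := by
    rw [← Real.rpow_add_one hs.ne']
    ring_nf
  rw [integral_stableMeasure, integral_stableMeasure]
  simp_rw [rpow_abs_mul_comp_div hs (-1 - Y) f]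
  rw [integral_const_mul, Measure.integral_comp_div (fun y => |y| ^ (-1 - Y) * f y),
    abs_of_pos hs, smul_eq_mul, ← mul_assoc, hpow]

lemma integrable_min_abs_sq_stableMeasure {Y : ℝ} (hY1 : 1 < Y) (hY2 : Y < 2) :
    Integrable (fun y => min |y| (y ^ 2)) (stableMeasure Y) := by
  have hhalf : IntegrableOn (fun z : ℝ => z ^ (-1 - Y) * min z (z ^ 2)) (Ioi 0) := by
    rw [← Ioc_union_Ioi_eq_Ioi zero_le_one]
    refine IntegrableOn.union ?_ ?_
    · have h := intervalIntegral.intervalIntegrable_rpow' (a := 0) (b := 1) (r := 1 - Y)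
        (by linarith)
      rw [intervalIntegrable_iff_integrableOn_Ioc_of_le zero_le_one] at h
      refine h.congr_fun (fun z hz => ?_) measurableSet_Ioc
      dsimp only
      rw [min_eq_right (by nlinarith [hz.1, hz.2]), ← Real.rpow_natCast z 2, ← Real.rpow_add hz.1]
      congr 1
      push_cast
      ring
    · refine (integrableOn_Ioi_rpow_of_lt (a := -Y) (by linarith) one_pos).congr_fun
        (fun z hz => ?_) measurableSet_Ioi
      have hz : 1 < z := hz
      dsimp only
      rw [min_eq_left (by nlinarith), ← Real.rpow_add_one (by positivity)]
      congr 1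
      ring
  have h := (integrable_fun_norm_addHaar (volume : Measure ℝ)
    (f := fun z : ℝ => z ^ (-1 - Y) * min z (z ^ 2))).2
    (by simpa only [Module.finrank_self, tsub_self, pow_zero, one_smul] using hhalf)
  simpa only [integrable_stableMeasure_iff, Real.norm_eq_abs, sq_abs] using h

lemma abs_bump_sub_sub_ite_le {p r : ℝ} (hp : 0 ≤ p) (hr : 1 ≤ r) (x z : ℝ) :
    |bump p (x + z) - bump p x - (if |z| ≤ r then z * deriv (bump p) x else 0)|
      ≤ (2 * p * (2 * p + 3) * 3 ^ p + 1 + p) * bump p x * min |z| (z ^ 2)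
        + {z | 1 < |z|}.indicator (fun z => bump p (x + z)) z := by
  have hx := bump_pos p x
  rcases le_or_gt |z| 1 with hz | hz
  · rw [if_pos (hz.trans hr), indicator_of_notMem (by simpa using hz), add_zero,
      min_eq_right (by rw [← sq_abs]; nlinarith [abs_nonneg z])]
    refine (abs_bump_sub_sub_le hp hz).trans ?_
    gcongr
    linarith
  · have hderiv : |if |z| ≤ r then z * deriv (bump p) x else 0| ≤ |z| * (p * bump p x) := by
      split_ifs
      · rw [abs_mul]
        gcongr
        exact abs_deriv_bump_le hp x
      · rw [abs_zero]
        positivity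
    have hsplit : |bump p (x + z) - bump p x - (if |z| ≤ r then z * deriv (bump p) x else 0)|
        ≤ bump p (x + z) + bump p x + |z| * (p * bump p x) := by
      have hxz := bump_pos p (x + z)
      rw [abs_le] at hderiv ⊢
      constructor <;> linarith [hderiv.1, hderiv.2]
    have hTaylor : 0 ≤ 2 * p * (2 * p + 3) * 3 ^ p * bump p x * |z| := by positivity
    rw [indicator_of_mem (by exact hz), min_eq_left (by rw [← sq_abs]; nlinarith)]
    nlinarith

lemma indicator_bump_mul_le {p : ℝ} (hp : 0 ≤ p) (x z : ℝ) :
    |z| ^ (-2 * p) * {z | 1 < |z|}.indicator (fun z => bump p (x + z)) z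
      ≤ 2 ^ p * 4 ^ p * bump p x * (bump p z + bump p (x + z)) := by
  have hxz := bump_pos p (x + z)
  by_cases hz : 1 < |z|
  · rw [indicator_of_mem (by exact hz)]
    calc |z| ^ (-2 * p) * bump p (x + z) ≤ 2 ^ p * bump p z * bump p (x + z) := by
          exact mul_le_mul_of_nonneg_right (rpow_abs_le_mul_bump hp hz.le) hxz.le
      _ = 2 ^ p * (bump p (x + z) * bump p z) := by ring
      _ ≤ 2 ^ p * (4 ^ p * bump p x * (bump p z + bump p (x + z))) := by
          exact mul_le_mul_of_nonneg_left (bump_add_mul_bump_le hp x z) (by positivity)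
      _ = 2 ^ p * 4 ^ p * bump p x * (bump p z + bump p (x + z)) := by ring
  · rw [indicator_of_notMem (by exact hz), mul_zero]
    have := bump_pos p x
    have := bump_pos p z
    positivity

lemma integrable_bump_add_bump {p : ℝ} (hp : 1 / 2 < p) (x : ℝ) :
    Integrable fun z => bump p z + bump p (x + z) :=
  (integrable_bump hp).add ((integrable_bump hp).comp_add_left x)

section StableMeasure

variable {p Y : ℝ}

lemma integrable_indicator_bump_stableMeasure (hp : 2 * p = 1 + Y) (hY : 0 < Y) (x : ℝ) :
    Integrable ({z | 1 < |z|}.indicator fun z => bump p (x + z)) (stableMeasure Y) := by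
  have hset : MeasurableSet {z : ℝ | 1 < |z|} := measurableSet_lt measurable_const (by fun_prop)
  have hmeas : Measurable ({z | 1 < |z|}.indicator fun z => bump p (x + z)) :=
    Measurable.indicator (by fun_prop) hset
  rw [integrable_stableMeasure_iff]
  refine ((integrable_bump_add_bump (p := p) (by linarith) x).const_mul
    (2 ^ p * 4 ^ p * bump p x)).mono'
    (Measurable.mul (by fun_prop) hmeas).aestronglyMeasurable (ae_of_all _ fun z => ?_)
  rw [Real.norm_of_nonneg (mul_nonneg (by positivity)
    (indicator_nonneg (fun _ _ => (bump_pos _ _).le) _)), show -1 - Y = -2 * p by linarith]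
  exact indicator_bump_mul_le (by linarith) x z

lemma integral_indicator_bump_stableMeasure_le (hp : 2 * p = 1 + Y) (hY : 0 < Y) (x : ℝ) :
    ∫ z, {z | 1 < |z|}.indicator (fun z => bump p (x + z)) z ∂(stableMeasure Y)
      ≤ 2 ^ p * 4 ^ p * (2 * ∫ z, bump p z) * bump p x := by
  have hbump : Integrable (bump p) := integrable_bump (by linarith)
  rw [integral_stableMeasure]
  calc ∫ z, |z| ^ (-1 - Y) * {z | 1 < |z|}.indicator (fun z => bump p (x + z)) z
      ≤ ∫ z, 2 ^ p * 4 ^ p * bump p x * (bump p z + bump p (x + z)) := by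
        refine integral_mono
          (integrable_stableMeasure_iff.1 (integrable_indicator_bump_stableMeasure hp hY x))
          ((integrable_bump_add_bump (by linarith) x).const_mul _) fun z => ?_
        dsimp only
        rw [show -1 - Y = -2 * p by linarith]
        exact indicator_bump_mul_le (by linarith) x z
    _ = 2 ^ p * 4 ^ p * (2 * ∫ z, bump p z) * bump p x := by
        rw [integral_const_mul, integral_add hbump (hbump.comp_add_left x),
          integral_add_left_eq_self (bump p)]
        ring

/-- The radius `r` of the compensated jumps is arbitrary because rescaling space changes it. -/
lemma exists_forall_abs_bump_sub_sub_ite_le (hp : 2 * p = 1 + Y) (hY1 : 1 < Y) (hY2 : Y < 2) :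
    ∃ K, 0 ≤ K ∧ ∀ x, ∃ G : ℝ → ℝ, Integrable G (stableMeasure Y) ∧
      (∀ r, 1 ≤ r → ∀ z,
        |bump p (x + z) - bump p x - (if |z| ≤ r then z * deriv (bump p) x else 0)| ≤ G z) ∧
      ∫ z, G z ∂(stableMeasure Y) ≤ K * bump p x := by
  have hp0 : 0 < p := by linarith
  have hmin := integrable_min_abs_sq_stableMeasure hY1 hY2
  have hbump0 : 0 ≤ ∫ z, bump p z := integral_nonneg fun z => (bump_pos p z).le
  set c := 2 * p * (2 * p + 3) * 3 ^ p + 1 + p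
  refine ⟨c * ∫ z, min |z| (z ^ 2) ∂(stableMeasure Y) + 2 ^ p * 4 ^ p * (2 * ∫ z, bump p z),
    by positivity, fun x => ⟨_, (hmin.const_mul (c * bump p x)).add
      (integrable_indicator_bump_stableMeasure hp (by linarith) x),
      fun r hr z => abs_bump_sub_sub_ite_le hp0.le hr x z, ?_⟩⟩
  have htail := integral_indicator_bump_stableMeasure_le hp (by linarith) x
  rw [integral_add' (hmin.const_mul _)
    (integrable_indicator_bump_stableMeasure hp (by linarith) x), integral_const_mul]
  linarith

lemma deriv_bump_div (p s x : ℝ) :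
    deriv (fun y => bump p (y / s)) x = deriv (bump p) (x / s) / s := by
  have h := (hasDerivAt_bump p (x / s)).comp x ((hasDerivAt_id x).div_const s)
  rw [(hasDerivAt_bump p (x / s)).deriv, div_eq_mul_one_div]
  exact h.deriv

lemma exists_forall_abs_integral_bump_div_le (hp : 2 * p = 1 + Y) (hY1 : 1 < Y) (hY2 : Y < 2)
    {ν : Measure ℝ} {c : ℝ≥0} (hν : ν ≤ c • stableMeasure Y) :
    ∃ K, 0 ≤ K ∧ ∀ s, 0 < s → s ≤ 1 → ∀ x,
      |∫ y, (bump p ((x + y) / s) - bump p (x / s)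
        - (if |y| ≤ 1 then y • deriv (fun y => bump p (y / s)) x else 0)) ∂ν|
      ≤ K * (s ^ (-Y) * bump p (x / s)) := by
  obtain ⟨K, hK, hG⟩ := exists_forall_abs_bump_sub_sub_ite_le hp hY1 hY2
  refine ⟨c * K, by positivity, fun s hs hs1 x => ?_⟩
  obtain ⟨G, hGint, hGle, hGK⟩ := hG (x / s)
  have hGs : Integrable (fun y => G (y / s)) (c • stableMeasure Y) :=
    (integrable_comp_div_stableMeasure hs hGint).smul_measure_nnreal
  have hG0 : ∀ y, 0 ≤ G (y / s) := fun y => (abs_nonneg _).trans (hGle 1 le_rfl _)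
  calc |∫ y, (bump p ((x + y) / s) - bump p (x / s)
        - (if |y| ≤ 1 then y • deriv (fun y => bump p (y / s)) x else 0)) ∂ν|
      ≤ ∫ y, G (y / s) ∂ν := by
        rw [← Real.norm_eq_abs]
        refine norm_integral_le_of_norm_le (hGs.mono_measure hν) (ae_of_all _ fun y => ?_)
        have h := hGle (1 / s) ((one_le_div hs).2 hs1) (y / s)
        simp only [abs_div, abs_of_pos hs, div_le_div_iff_of_pos_right hs, ← add_div] at h
        rwa [deriv_bump_div, smul_eq_mul, mul_div_assoc', ← div_mul_eq_mul_div]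
    _ ≤ ∫ y, G (y / s) ∂(c • stableMeasure Y) := integral_mono_measure hν (ae_of_all _ hG0) hGs
    _ = c * (s ^ (-Y) * ∫ y, G y ∂(stableMeasure Y)) := by
        rw [integral_smul_nnreal_measure, integral_comp_div_stableMeasure hs, NNReal.smul_def,
          smul_eq_mul]
    _ ≤ c * (s ^ (-Y) * (K * bump p (x / s))) := by gcongr
    _ = c * K * (s ^ (-Y) * bump p (x / s)) := by ring

/-- The jumps contribute at the rate `s^(-Y)` because `bump p` has the same tail as a `Y`-stable
jump law; the drift only contributes `s^(-1)`, which is smaller for `s ≤ 1`. -/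
theorem exists_forall_abs_levyGenerator_bump_le (hp : 2 * p = 1 + Y) (hY1 : 1 < Y) (hY2 : Y < 2)
    (b : ℝ) {ν : Measure ℝ} {c : ℝ≥0} (hν : ν ≤ c • stableMeasure Y) :
    ∃ K, 0 ≤ K ∧ ∀ s, 0 < s → s ≤ 1 → ∀ x,
      |levyGenerator b ν (fun y => bump p (y / s)) x| ≤ K * s ^ (-Y) * bump p (x / s) := by
  have hp0 : 0 ≤ p := by linarith
  obtain ⟨K, hK, hjump⟩ := exists_forall_abs_integral_bump_div_le hp hY1 hY2 hν
  refine ⟨|b| * p + K, by positivity, fun s hs hs1 x => ?_⟩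
  have hdrift : |b • deriv (fun y => bump p (y / s)) x|
      ≤ |b| * p * (s ^ (-Y) * bump p (x / s)) := by
    have hinv : 1 / s ≤ s ^ (-Y) := by
      rw [one_div, ← Real.rpow_neg_one]
      exact Real.rpow_le_rpow_of_exponent_ge hs hs1 (by linarith)
    have := bump_pos p (x / s)
    calc |b • deriv (fun y => bump p (y / s)) x| = |b| * |deriv (bump p) (x / s)| * (1 / s) := by
          rw [deriv_bump_div, smul_eq_mul, abs_mul, abs_div, abs_of_pos hs]
          ring
      _ ≤ |b| * (p * bump p (x / s)) * s ^ (-Y) := by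
          gcongr
          exact abs_deriv_bump_le hp0 _
      _ = |b| * p * (s ^ (-Y) * bump p (x / s)) := by ring
  calc |levyGenerator b ν (fun y => bump p (y / s)) x|
      ≤ |b| * p * (s ^ (-Y) * bump p (x / s)) + K * (s ^ (-Y) * bump p (x / s)) :=
        (abs_add_le _ _).trans (add_le_add hdrift (hjump s hs hs1 x))
    _ = (|b| * p + K) * s ^ (-Y) * bump p (x / s) := by ring

end StableMeasure

lemma integrable_min_one_sq_of_le_stableMeasure {Y : ℝ} (hY1 : 1 < Y) (hY2 : Y < 2)
    {ν : Measure ℝ} {c : ℝ≥0} (hν : ν ≤ c • stableMeasure Y) :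
    Integrable (fun y => min 1 (y ^ 2)) ν := by
  refine ((integrable_min_abs_sq_stableMeasure hY1 hY2).smul_measure_nnreal.mono_measure hν).mono'
    (by fun_prop) (ae_of_all _ fun y => ?_)
  rw [Real.norm_of_nonneg (by positivity)]
  rcases le_total |y| 1 with h | h
  · exact (min_le_right _ _).trans (le_min (by rw [← sq_abs]; nlinarith [abs_nonneg y]) le_rfl)
  · exact (min_le_left _ _).trans (le_min h (by rw [← sq_abs]; nlinarith))

/-! ### Small-time estimates for the marginals -/

lemma one_le_mul_bump {p x : ℝ} (hp : 0 ≤ p) (hx : |x| ≤ 1) : 1 ≤ 2 ^ p * bump p x := by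
  rw [← bump_zero p]
  exact bump_le_mul_bump hp two_pos (by linarith [sq_le_one_iff_abs_le_one x |>.2 hx])

lemma sq_le_mul_one_sub_bump {p x : ℝ} (hp : 1 ≤ p) (hx : |x| ≤ 1) :
    x ^ 2 ≤ 2 * (1 - bump p x) := by
  have hx2 : x ^ 2 ≤ 1 := (sq_le_one_iff_abs_le_one x).2 hx
  have hinv : bump p x ≤ (1 + x ^ 2)⁻¹ := by
    rw [← Real.rpow_neg_one]
    exact Real.rpow_le_rpow_of_exponent_le (by nlinarith) (by linarith)
  have hle : (1 + x ^ 2)⁻¹ ≤ 1 - x ^ 2 / 2 := by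
    rw [inv_le_iff_one_le_mul₀ (by positivity)]
    nlinarith [sq_nonneg x]
  linarith

lemma integrableOn_closedBall_of_continuous {μ : Measure ℝ} [IsFiniteMeasure μ] {f : ℝ → ℝ}
    (hf : Continuous f) {x s : ℝ} : IntegrableOn f (Metric.closedBall x s) μ :=
  hf.continuousOn.integrableOn_compact (isCompact_closedBall x s)

lemma integrable_bump_comp_div {μ : Measure ℝ} [IsFiniteMeasure μ] {p : ℝ} (hp : 0 ≤ p) (x s : ℝ) :
    Integrable (fun y => bump p ((x + y) / s)) μ :=
  Integrable.of_bound (Measurable.aestronglyMeasurable (by fun_prop)) 1 (ae_of_all _ fun y => by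
    rw [Real.norm_of_nonneg (bump_pos p _).le]
    exact bump_le_one hp _)

lemma measureReal_Icc_le_of_closedBall_le {μ : Measure ℝ} [IsFiniteMeasure μ] {l u s β : ℝ}
    (hs : 0 < s) (hlu : l ≤ u) (h : ∀ x ∈ Icc l u, μ.real (Metric.closedBall x s) ≤ β) :
    μ.real (Icc l u) ≤ ((u - l) / s + 1) * β := by
  have hβ : 0 ≤ β := measureReal_nonneg.trans (h l (left_mem_Icc.2 hlu))
  have hcenter : ∀ i ∈ Finset.range (⌊(u - l) / s⌋₊ + 1), l + i * s ∈ Icc l u := fun i hi => by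
    have hi : (i : ℝ) ≤ (u - l) / s :=
      (Nat.le_floor_iff (div_nonneg (sub_nonneg.2 hlu) hs.le)).1 (Finset.mem_range_succ_iff.1 hi)
    rw [le_div_iff₀ hs] at hi
    exact ⟨by nlinarith [i.cast_nonneg (α := ℝ)], by linarith⟩
  have hcover : Icc l u
      ⊆ ⋃ i ∈ Finset.range (⌊(u - l) / s⌋₊ + 1), Metric.closedBall (l + i * s) s := fun y hy => by
    have hy0 : 0 ≤ (y - l) / s := div_nonneg (sub_nonneg.2 hy.1) hs.le
    have hfloor : ⌊(y - l) / s⌋₊ ≤ ⌊(u - l) / s⌋₊ := by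
      gcongr
      exact hy.2
    have hle := Nat.floor_le hy0
    have hlt := Nat.lt_floor_add_one ((y - l) / s)
    rw [le_div_iff₀ hs] at hle
    rw [div_lt_iff₀ hs] at hlt
    refine mem_biUnion (x := ⌊(y - l) / s⌋₊) (Finset.mem_coe.2
      (Finset.mem_range_succ_iff.2 hfloor)) ?_
    rw [Metric.mem_closedBall, Real.dist_eq, abs_le]
    constructor <;> linarith
  calc μ.real (Icc l u)
      ≤ μ.real (⋃ i ∈ Finset.range (⌊(u - l) / s⌋₊ + 1), Metric.closedBall (l + i * s) s) :=
        measureReal_mono hcover (measure_ne_top _ _)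
    _ ≤ ∑ i ∈ Finset.range (⌊(u - l) / s⌋₊ + 1), μ.real (Metric.closedBall (l + i * s) s) :=
        measureReal_biUnion_finset_le _ _
    _ ≤ (⌊(u - l) / s⌋₊ + 1) * β := by
        refine (Finset.sum_le_card_nsmul _ _ β fun i hi => h _ (hcenter i hi)).trans_eq ?_
        rw [Finset.card_range, nsmul_eq_mul, Nat.cast_add_one]
    _ ≤ ((u - l) / s + 1) * β := by
        gcongr
        exact Nat.floor_le (div_nonneg (sub_nonneg.2 hlu) hs.le)

namespace HasLevyExponent

variable {Y b₀ : ℝ} {ν : Measure ℝ} [SFinite ν] {c : ℝ≥0} {μ : ℝ → Measure ℝ}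

theorem exists_integral_bump_mem_Icc (hμ : HasLevyExponent μ (levyExponent b₀ ν))
    (hν : ν ≤ c • stableMeasure Y) (hY1 : 1 < Y) (hY2 : Y < 2) {p : ℝ} (hp : 2 * p = 1 + Y) :
    ∃ K, 0 ≤ K ∧ ∀ s, 0 < s → s ≤ 1 → ∀ t, 0 < t → ∀ x,
      ∫ y, bump p ((x + y) / s) ∂(μ t) ∈ Icc (Real.exp (-(K * s ^ (-Y) * t)) * bump p (x / s))
        (Real.exp (K * s ^ (-Y) * t) * bump p (x / s)) := by
  have hp0 : 0 < p := by linarith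
  have := isProbabilityMeasure_varianceGamma hp0
  obtain ⟨K, hK, hgen⟩ := exists_forall_abs_levyGenerator_bump_le hp hY1 hY2 b₀ hν
  refine ⟨K, hK, fun s hs hs1 t ht x => ?_⟩
  have hscale : Measurable fun v : ℝ => s⁻¹ * v := by fun_prop
  have := Measure.isProbabilityMeasure_map (μ := varianceGamma p) hscale.aemeasurable
  refine hμ.integral_mem_Icc_of_abs_levyGenerator_le
    (integrable_min_one_sq_of_le_stableMeasure hY1 hY2 hν)
    (m := (varianceGamma p).map fun v => s⁻¹ * v) ?_ (fun x => ?_) (hgen s hs hs1) ht x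
  · exact (memLp_map_measure_iff (by fun_prop) hscale.aemeasurable).2
      ((memLp_two_varianceGamma hp0).const_mul s⁻¹)
  · rw [charFun_map_mul, charFun_varianceGamma hp0, inv_mul_eq_div]

lemma exists_setIntegral_sq_le (hμ : HasLevyExponent μ (levyExponent b₀ ν))
    (hν : ν ≤ c • stableMeasure Y) (hY1 : 1 < Y) (hY2 : Y < 2) :
    ∃ C, 0 ≤ C ∧ ∀ s, 0 < s → s ≤ 1 → ∀ t, 0 < t →
      ∫ y in Metric.closedBall 0 s, y ^ 2 ∂(μ t) ≤ C * (t * s ^ (2 - Y)) := by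
  obtain ⟨p, hp⟩ : ∃ p, 2 * p = 1 + Y := ⟨(1 + Y) / 2, by ring⟩
  obtain ⟨K, hK, hbump⟩ := hμ.exists_integral_bump_mem_Icc hν hY1 hY2 hp
  refine ⟨2 * K, by positivity, fun s hs hs1 t ht => ?_⟩
  have := hμ.isProbabilityMeasure t ht
  have hint : Integrable (fun y => bump p (y / s)) (μ t) := by
    simpa only [zero_add] using integrable_bump_comp_div (μ := μ t) (p := p) (by linarith) 0 s
  have hgap : Integrable (fun y => 2 * s ^ 2 * (1 - bump p (y / s))) (μ t) :=
    ((integrable_const 1).sub hint).const_mul _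
  have hgap0 : ∀ y, 0 ≤ 2 * s ^ 2 * (1 - bump p (y / s)) := fun y =>
    mul_nonneg (by positivity) (sub_nonneg.2 (bump_le_one (by linarith) _))
  have hlow : 1 - K * s ^ (-Y) * t ≤ ∫ y, bump p (y / s) ∂(μ t) := by
    have h := (hbump s hs hs1 t ht 0).1
    simp only [zero_div, bump_zero, mul_one, zero_add] at h
    exact (by linarith [Real.add_one_le_exp (-(K * s ^ (-Y) * t))] : _ ≤ _).trans h
  calc ∫ y in Metric.closedBall 0 s, y ^ 2 ∂(μ t)
      ≤ ∫ y in Metric.closedBall 0 s, 2 * s ^ 2 * (1 - bump p (y / s)) ∂(μ t) := by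
        refine setIntegral_mono_on (integrableOn_closedBall_of_continuous (by fun_prop))
          hgap.integrableOn measurableSet_closedBall fun y hy => ?_
        rw [mem_closedBall_zero_iff, Real.norm_eq_abs] at hy
        have h := sq_le_mul_one_sub_bump (p := p) (x := y / s) (by linarith)
          (by rwa [abs_div, abs_of_pos hs, div_le_one hs])
        rw [div_pow, div_le_iff₀ (by positivity)] at h
        linarith
    _ ≤ ∫ y, 2 * s ^ 2 * (1 - bump p (y / s)) ∂(μ t) :=
        setIntegral_le_integral hgap (ae_of_all _ hgap0)
    _ = 2 * s ^ 2 * (1 - ∫ y, bump p (y / s) ∂(μ t)) := by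
        rw [integral_const_mul, integral_sub (integrable_const 1) hint, integral_const,
          probReal_univ, one_smul]
    _ ≤ 2 * s ^ 2 * (K * s ^ (-Y) * t) := by
        gcongr
        linarith
    _ = 2 * K * (t * s ^ (2 - Y)) := by
        rw [sub_eq_add_neg, Real.rpow_add hs, Real.rpow_two]
        ring

lemma exists_measureReal_closedBall_le (hμ : HasLevyExponent μ (levyExponent b₀ ν))
    (hν : ν ≤ c • stableMeasure Y) (hY1 : 1 < Y) (hY2 : Y < 2) :
    ∃ C, 0 ≤ C ∧ ∀ s, 0 < s → s ≤ 1 → ∀ x, x ≠ 0 →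
      (μ (s ^ Y)).real (Metric.closedBall x s) ≤ C * (s / |x|) ^ (1 + Y) := by
  obtain ⟨p, hp⟩ : ∃ p, 2 * p = 1 + Y := ⟨(1 + Y) / 2, by ring⟩
  obtain ⟨K, -, hbump⟩ := hμ.exists_integral_bump_mem_Icc hν hY1 hY2 hp
  refine ⟨2 ^ p * Real.exp K, by positivity, fun s hs hs1 x hx => ?_⟩
  have hp0 : 0 ≤ p := by linarith
  have hsY : 0 < s ^ Y := by positivity
  have := hμ.isProbabilityMeasure _ hsY
  have hup : ∫ y, bump p ((-x + y) / s) ∂(μ (s ^ Y)) ≤ Real.exp K * bump p (x / s) := by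
    have h := (hbump s hs hs1 _ hsY (-x)).2
    rwa [mul_assoc K, ← Real.rpow_add hs, neg_add_cancel, Real.rpow_zero, mul_one, neg_div,
      bump_neg] at h
  have hsub : Metric.closedBall x s ⊆ {y | 1 ≤ 2 ^ p * bump p ((-x + y) / s)} := fun y hy => by
    rw [Metric.mem_closedBall, Real.dist_eq] at hy
    refine one_le_mul_bump hp0 ?_
    rwa [abs_div, abs_of_pos hs, div_le_one hs, neg_add_eq_sub]
  calc (μ (s ^ Y)).real (Metric.closedBall x s)
      ≤ 1 * (μ (s ^ Y)).real {y | 1 ≤ 2 ^ p * bump p ((-x + y) / s)} := by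
        rw [one_mul]
        exact measureReal_mono hsub (measure_ne_top _ _)
    _ ≤ ∫ y, 2 ^ p * bump p ((-x + y) / s) ∂(μ (s ^ Y)) :=
        mul_meas_ge_le_integral_of_nonneg
          (ae_of_all _ fun y => mul_nonneg (by positivity) (bump_pos p _).le)
          ((integrable_bump_comp_div hp0 (-x) s).const_mul _) 1
    _ ≤ 2 ^ p * (Real.exp K * |x / s| ^ (-2 * p)) := by
        rw [integral_const_mul]
        gcongr
        refine hup.trans ?_
        gcongr
        exact bump_le_rpow_abs hp0 (div_ne_zero hx hs.ne')
    _ = 2 ^ p * Real.exp K * (s / |x|) ^ (1 + Y) := by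
        rw [neg_mul, hp, Real.rpow_neg (abs_nonneg _), ← Real.inv_rpow (abs_nonneg _), abs_div,
          abs_of_pos hs, inv_div, mul_assoc]

end HasLevyExponent

lemma setOf_abs_abs_sub_le_subset (ε r : ℝ) :
    {y : ℝ | |(|y|) - ε| ≤ r} ⊆ Icc (ε - r) (ε + r) ∪ Icc (-(ε + r)) (-(ε - r)) := fun y hy => by
  rw [mem_ofPred_eq, abs_le] at hy
  rcases abs_cases y with ⟨h, _⟩ | ⟨h, _⟩ <;> rw [h] at hy
  · exact Or.inl ⟨by linarith, by linarith⟩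
  · exact Or.inr ⟨by linarith, by linarith⟩

lemma measureReal_shell_le_of_closedBall_le {μ : Measure ℝ} [IsFiniteMeasure μ] {ε r s β : ℝ}
    (hs : 0 < s) (hr : 0 ≤ r) (hrε : r ≤ ε / 2)
    (h : ∀ x, ε / 2 ≤ |x| → μ.real (Metric.closedBall x s) ≤ β) :
    μ.real {y | |(|y|) - ε| ≤ r} ≤ 2 * ((2 * r / s + 1) * β) := by
  have hright : μ.real (Icc (ε - r) (ε + r)) ≤ (2 * r / s + 1) * β := by
    refine (measureReal_Icc_le_of_closedBall_le hs (by linarith) fun x hx =>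
      h x ((by linarith [hx.1] : ε / 2 ≤ x).trans (le_abs_self x))).trans_eq ?_
    ring
  have hleft : μ.real (Icc (-(ε + r)) (-(ε - r))) ≤ (2 * r / s + 1) * β := by
    refine (measureReal_Icc_le_of_closedBall_le hs (by linarith) fun x hx =>
      h x ((by linarith [hx.2] : ε / 2 ≤ -x).trans (neg_le_abs x))).trans_eq ?_
    ring
  calc μ.real {y | |(|y|) - ε| ≤ r}
      ≤ μ.real (Icc (ε - r) (ε + r)) + μ.real (Icc (-(ε + r)) (-(ε - r))) :=
        (measureReal_mono (setOf_abs_abs_sub_le_subset ε r) (measure_ne_top _ _)).trans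
          (measureReal_union_le _ _)
    _ ≤ 2 * ((2 * r / s + 1) * β) := by linarith

lemma abs_le_half_add_sq_div {l : ℝ} (hl : 0 < l) (y : ℝ) : |y| ≤ (l + y ^ 2 / l) / 2 := by
  rw [← sq_abs, le_div_iff₀ two_pos, ← sub_nonneg]
  have h : l + |y| ^ 2 / l - |y| * 2 = (l - |y|) ^ 2 / l := by
    field_simp
    ring
  rw [h]
  positivity

namespace HasLevyExponent

variable {Y b₀ : ℝ} {ν : Measure ℝ} [SFinite ν] {c : ℝ≥0} {μ : ℝ → Measure ℝ}

lemma exists_measureReal_shell_le (hμ : HasLevyExponent μ (levyExponent b₀ ν))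
    (hν : ν ≤ c • stableMeasure Y) (hY1 : 1 < Y) (hY2 : Y < 2) :
    ∃ C, 0 ≤ C ∧ ∀ t, 0 < t → t ≤ 1 → ∀ ε r, 0 < ε → 0 ≤ r → r ≤ ε / 2 →
      (μ t).real {y | |(|y|) - ε| ≤ r} ≤ C * (t * ε ^ (-1 - Y) * (r + √t)) := by
  obtain ⟨C, hC, hball⟩ := hμ.exists_measureReal_closedBall_le hν hY1 hY2
  refine ⟨4 * 2 ^ (1 + Y) * C, by positivity, fun t ht ht1 ε r hε hr hrε => ?_⟩
  have := hμ.isProbabilityMeasure t ht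
  set s := t ^ (1 / Y) with hsdef
  have hs : 0 < s := Real.rpow_pos_of_pos ht _
  have hs1 : s ≤ 1 := Real.rpow_le_one ht.le ht1 (by positivity)
  have hsY : s ^ Y = t := by rw [hsdef, ← Real.rpow_mul ht.le, one_div_mul_cancel (by linarith),
    Real.rpow_one]
  have hst : s ≤ √t := by
    rw [Real.sqrt_eq_rpow]
    exact Real.rpow_le_rpow_of_exponent_ge ht ht1 (one_div_le_one_div_of_le (by linarith) hY2.le)
  have hβ : ∀ x, ε / 2 ≤ |x| → (μ t).real (Metric.closedBall x s) ≤ C * (s / (ε / 2)) ^ (1 + Y) :=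
    fun x hx => by
      have hx0 : 0 < |x| := (half_pos hε).trans_le hx
      have h := hball s hs hs1 x (abs_pos.1 hx0)
      rw [hsY] at h
      refine h.trans ?_
      gcongr
  have hpow : (s / (ε / 2)) ^ (1 + Y) = 2 ^ (1 + Y) * (s * t) * ε ^ (-1 - Y) := by
    rw [div_div_eq_mul_div, Real.div_rpow (by positivity) hε.le, Real.mul_rpow hs.le two_pos.le,
      Real.rpow_add hs 1 Y, Real.rpow_one, hsY, show -1 - Y = -(1 + Y) by ring,
      Real.rpow_neg hε.le]
    ring
  calc (μ t).real {y | |(|y|) - ε| ≤ r}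
      ≤ 2 * ((2 * r / s + 1) * (C * (s / (ε / 2)) ^ (1 + Y))) :=
        measureReal_shell_le_of_closedBall_le hs hr hrε hβ
    _ = 2 * 2 ^ (1 + Y) * C * (t * ε ^ (-1 - Y) * (2 * r + s)) := by
        rw [hpow]
        field_simp
    _ ≤ 2 * 2 ^ (1 + Y) * C * (t * ε ^ (-1 - Y) * (2 * (r + √t))) := by
        gcongr
        linarith [Real.sqrt_nonneg t]
    _ = 4 * 2 ^ (1 + Y) * C * (t * ε ^ (-1 - Y) * (r + √t)) := by ring

lemma exists_setIntegral_abs_pow_le (hμ : HasLevyExponent μ (levyExponent b₀ ν))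
    (hν : ν ≤ c • stableMeasure Y) (hY1 : 1 < Y) (hY2 : Y < 2) {b : ℕ} (hb : 2 ≤ b) :
    ∃ C, ∀ s, 0 < s → s ≤ 1 → ∀ t, 0 < t →
      ∫ y in Metric.closedBall 0 s, |y| ^ b ∂(μ t) ≤ C * (t * s ^ (b - Y)) := by
  obtain ⟨C, -, hsq⟩ := hμ.exists_setIntegral_sq_le hν hY1 hY2
  obtain ⟨n, rfl⟩ := Nat.exists_eq_add_of_le' hb
  refine ⟨C, fun s hs hs1 t ht => ?_⟩
  have := hμ.isProbabilityMeasure t ht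
  calc ∫ y in Metric.closedBall 0 s, |y| ^ (n + 2) ∂(μ t)
      ≤ ∫ y in Metric.closedBall 0 s, s ^ n * y ^ 2 ∂(μ t) := by
        refine setIntegral_mono_on
          (integrableOn_closedBall_of_continuous (by fun_prop))
          (integrableOn_closedBall_of_continuous (by fun_prop))
          measurableSet_closedBall fun y hy => ?_
        rw [mem_closedBall_zero_iff, Real.norm_eq_abs] at hy
        rw [pow_add, sq_abs]
        gcongr
    _ ≤ s ^ n * (C * (t * s ^ (2 - Y))) := by
        rw [integral_const_mul]
        gcongr
        exact hsq s hs hs1 t ht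
    _ = C * (t * s ^ ((n + 2 : ℕ) - Y)) := by
        rw [Nat.cast_add, Nat.cast_two, add_sub_assoc, Real.rpow_add hs, Real.rpow_natCast]
        ring

lemma exists_setIntegral_abs_pow_le_sqrt (hμ : HasLevyExponent μ (levyExponent b₀ ν))
    (hν : ν ≤ c • stableMeasure Y) (hY1 : 1 < Y) (hY2 : Y < 2) {b : ℕ} (hb : 1 ≤ b) :
    ∃ C, ∀ s, 0 < s → s ≤ 1 → ∀ t, 0 < t →
      ∫ y in Metric.closedBall 0 s, |y| ^ b ∂(μ t) ≤ C * (√t * s ^ (b - Y / 2)) := by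
  obtain ⟨C, hC, hsq⟩ := hμ.exists_setIntegral_sq_le hν hY1 hY2
  obtain ⟨n, rfl⟩ := Nat.exists_eq_add_of_le' hb
  refine ⟨(1 + C) / 2, fun s hs hs1 t ht => ?_⟩
  have := hμ.isProbabilityMeasure t ht
  set l := √t * s ^ (1 - Y / 2) with hldef
  have hl : 0 < l := by positivity
  have hl2 : t * s ^ (2 - Y) = l ^ 2 := by
    rw [mul_pow, Real.sq_sqrt ht.le, ← Real.rpow_mul_natCast hs.le]
    congr 2
    push_cast
    ring
  have hint : IntegrableOn (fun y : ℝ => y ^ 2) (Metric.closedBall 0 s) (μ t) :=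
    integrableOn_closedBall_of_continuous (by fun_prop)
  calc ∫ y in Metric.closedBall 0 s, |y| ^ (n + 1) ∂(μ t)
      ≤ ∫ y in Metric.closedBall 0 s, s ^ n * ((l + y ^ 2 / l) / 2) ∂(μ t) := by
        refine setIntegral_mono_on
          (integrableOn_closedBall_of_continuous (by fun_prop))
          (integrableOn_closedBall_of_continuous (by fun_prop))
          measurableSet_closedBall fun y hy => ?_
        rw [mem_closedBall_zero_iff, Real.norm_eq_abs] at hy
        rw [pow_succ]
        gcongr
        exact abs_le_half_add_sq_div hl y
    _ = s ^ n * (((μ t).real (Metric.closedBall 0 s) * l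
          + (∫ y in Metric.closedBall 0 s, y ^ 2 ∂(μ t)) / l) / 2) := by
        rw [integral_const_mul, integral_div, integral_add (integrable_const l) (hint.div_const l),
          integral_div, setIntegral_const, smul_eq_mul]
    _ ≤ s ^ n * ((1 * l + C * l ^ 2 / l) / 2) := by
        gcongr
        · exact measureReal_le_one
        · exact hl2 ▸ hsq s hs hs1 t ht
    _ = (1 + C) / 2 * (√t * s ^ ((n + 1 : ℕ) - Y / 2)) := by
        rw [Nat.cast_add, Nat.cast_one, add_sub_assoc, Real.rpow_add hs, Real.rpow_natCast, hldef]
        field_simp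

end HasLevyExponent

/-! ### Truncated mixed moments of independent variables -/

/-- The monomial `z ^ a * x ^ b` at `p = (z, x)`, truncated to `|σ * z + x| ≤ ε`. -/
def truncatedMonomial (σ ε : ℝ) (a b : ℕ) (p : ℝ × ℝ) : ℝ :=
  p.1 ^ a * p.2 ^ b * indicator {x : ℝ | |x| ≤ ε} (fun _ => 1) (σ * p.1 + p.2)

/-- The pairs `(z, x)` with `|σ * z| ≤ ε / 2` at which truncating `x` instead of `σ * z + x` at
level `ε` can make a difference. -/
def mixedShell (σ ε : ℝ) : Set (ℝ × ℝ) :=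
  {p | |σ * p.1| ≤ ε / 2 ∧ |(|p.2|) - ε| ≤ |σ * p.1|}

lemma measurable_truncatedMonomial (σ ε : ℝ) (a b : ℕ) :
    Measurable (truncatedMonomial σ ε a b) := by
  have hind : Measurable (indicator {x : ℝ | |x| ≤ ε} fun _ => (1 : ℝ)) :=
    measurable_const.indicator (measurableSet_le measurable_norm measurable_const)
  unfold truncatedMonomial
  exact Measurable.mul (by fun_prop) (hind.comp (by fun_prop))

lemma measurableSet_mixedShell (σ ε : ℝ) : MeasurableSet (mixedShell σ ε) := by
  have hz : MeasurableSet {p : ℝ × ℝ | |σ * p.1| ≤ ε / 2} :=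
    measurableSet_le (by fun_prop) measurable_const
  have hx : MeasurableSet {p : ℝ × ℝ | |(|p.2|) - ε| ≤ |σ * p.1|} :=
    measurableSet_le (by fun_prop) (by fun_prop)
  exact hz.inter hx

lemma add_pow_le_of_half_lt {ε t : ℝ} (hε : 0 < ε) (ht : ε / 2 < t) (b n : ℕ) :
    (ε + t) ^ b ≤ 3 ^ b * (2 / ε) ^ n * t ^ (b + n) := by
  have ht0 : 0 < t := (half_pos hε).trans ht
  have hone : 1 ≤ 2 / ε * t := by
    rw [div_mul_eq_mul_div, one_le_div hε]
    linarith
  calc (ε + t) ^ b ≤ (3 * t) ^ b * 1 := by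
        rw [mul_one]
        gcongr
        linarith
    _ ≤ (3 * t) ^ b * (2 / ε * t) ^ n := by
        gcongr
        exact one_le_pow₀ hone
    _ = 3 ^ b * (2 / ε) ^ n * t ^ (b + n) := by ring

lemma abs_truncatedMonomial_le {ε : ℝ} (hε : 0 < ε) (σ : ℝ) (a b n : ℕ) (p : ℝ × ℝ) :
    |truncatedMonomial σ ε a b p| ≤
      |p.1| ^ a * indicator (Metric.closedBall 0 (2 * ε)) (fun x => |x| ^ b) p.2
        + 3 ^ b * (2 / ε) ^ n * |σ| ^ (b + n) * |p.1| ^ (a + b + n) := by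
  obtain ⟨z, x⟩ := p
  have hnear : 0 ≤ indicator (Metric.closedBall 0 (2 * ε)) (fun x : ℝ => |x| ^ b) x :=
    indicator_nonneg (fun _ _ => by positivity) x
  by_cases hmem : |σ * z + x| ≤ ε
  · have hx : |x| ≤ ε + |σ * z| := by
      have h := abs_sub (σ * z + x) (σ * z)
      rw [add_sub_cancel_left] at h
      linarith
    have hval : |truncatedMonomial σ ε a b (z, x)| = |z| ^ a * |x| ^ b := by
      rw [truncatedMonomial, indicator_of_mem (by exact hmem), mul_one, abs_mul, abs_pow, abs_pow]
    rw [hval]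
    rcases le_or_gt |σ * z| (ε / 2) with hz | hz
    · rw [indicator_of_mem (mem_closedBall_zero_iff.2 (show |x| ≤ 2 * ε by linarith))]
      exact le_add_of_nonneg_right (by positivity)
    · calc |z| ^ a * |x| ^ b ≤ |z| ^ a * (3 ^ b * (2 / ε) ^ n * |σ * z| ^ (b + n)) := by
            gcongr
            exact (pow_le_pow_left₀ (abs_nonneg x) hx b).trans (add_pow_le_of_half_lt hε hz b n)
        _ = 3 ^ b * (2 / ε) ^ n * |σ| ^ (b + n) * |z| ^ (a + b + n) := by
            rw [abs_mul]
            ring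
        _ ≤ _ := le_add_of_nonneg_left (by positivity)
  · rw [truncatedMonomial, indicator_of_notMem (by exact hmem), mul_zero, abs_zero]
    positivity

lemma abs_truncatedMonomial_sub_le_indicator (σ ε : ℝ) (a b : ℕ) (z x : ℝ) :
    |truncatedMonomial σ ε a b (z, x)
        - z ^ a * indicator (Metric.closedBall 0 ε) (fun x => x ^ b) x| ≤
      |z| ^ a * indicator {x | |(|x|) - ε| ≤ |σ * z|} (fun _ => (ε + |σ * z|) ^ b) x := by
  have habs : |z ^ a * x ^ b| = |z| ^ a * |x| ^ b := by rw [abs_mul, abs_pow, abs_pow]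
  have hlow : |x| - |σ * z| ≤ |σ * z + x| := by
    have h := abs_sub (σ * z + x) (σ * z)
    rw [add_sub_cancel_left] at h
    linarith
  have hupp : |σ * z + x| ≤ |σ * z| + |x| := abs_add_le _ _
  have hbound (h : |(|x|) - ε| ≤ |σ * z|) : |z ^ a * x ^ b| ≤
      |z| ^ a * indicator {x | |(|x|) - ε| ≤ |σ * z|} (fun _ => (ε + |σ * z|) ^ b) x := by
    rw [habs, indicator_of_mem (by exact h)]
    gcongr
    linarith [(abs_le.1 h).2]
  have hnonneg : 0 ≤
      |z| ^ a * indicator {x | |(|x|) - ε| ≤ |σ * z|} (fun _ => (ε + |σ * z|) ^ b) x := by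
    by_cases h : |(|x|) - ε| ≤ |σ * z|
    · exact (abs_nonneg _).trans (hbound h)
    · rw [indicator_of_notMem (by exact h), mul_zero]
  rw [truncatedMonomial]
  by_cases hzx : |σ * z + x| ≤ ε <;> by_cases hx : |x| ≤ ε
  · rw [indicator_of_mem (by exact hzx), indicator_of_mem (mem_closedBall_zero_iff.2 hx), mul_one,
      sub_self, abs_zero]
    exact hnonneg
  · rw [indicator_of_mem (by exact hzx),
      indicator_of_notMem (fun h => hx (mem_closedBall_zero_iff.1 h)), mul_one, mul_zero, sub_zero]
    exact hbound (abs_le.2 ⟨by linarith [abs_nonneg (σ * z)], by linarith⟩)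
  · rw [indicator_of_notMem (by exact hzx), indicator_of_mem (mem_closedBall_zero_iff.2 hx),
      mul_zero, zero_sub, abs_neg]
    exact hbound (abs_le.2 ⟨by linarith, by linarith [abs_nonneg (σ * z)]⟩)
  · rw [indicator_of_notMem (by exact hzx),
      indicator_of_notMem (fun h => hx (mem_closedBall_zero_iff.1 h)), mul_zero, mul_zero, sub_self,
      abs_zero]
    exact hnonneg

lemma abs_truncatedMonomial_sub_le {ε : ℝ} (hε : 0 < ε) (σ : ℝ) (a b n : ℕ) (p : ℝ × ℝ) :
    |truncatedMonomial σ ε a b p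
        - p.1 ^ a * indicator (Metric.closedBall 0 ε) (fun x => x ^ b) p.2| ≤
      (2 * ε) ^ b * (|p.1| ^ a * (mixedShell σ ε).indicator 1 p)
        + 3 ^ b * (2 / ε) ^ n * |σ| ^ (b + n) * |p.1| ^ (a + b + n) := by
  obtain ⟨z, x⟩ := p
  refine (abs_truncatedMonomial_sub_le_indicator σ ε a b z x).trans ?_
  have hshell : 0 ≤ (mixedShell σ ε).indicator (1 : ℝ × ℝ → ℝ) (z, x) :=
    indicator_nonneg (fun _ _ => zero_le_one) _
  by_cases hx : |(|x|) - ε| ≤ |σ * z|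
  · rw [indicator_of_mem (by exact hx)]
    rcases le_or_gt |σ * z| (ε / 2) with hz | hz
    · rw [indicator_of_mem (show (z, x) ∈ mixedShell σ ε from ⟨hz, hx⟩), Pi.one_apply, mul_one,
        mul_comm ((2 * ε) ^ b)]
      refine le_add_of_le_of_nonneg ?_ (by positivity)
      gcongr
      linarith
    · calc |z| ^ a * (ε + |σ * z|) ^ b ≤ |z| ^ a * (3 ^ b * (2 / ε) ^ n * |σ * z| ^ (b + n)) := by
            gcongr
            exact add_pow_le_of_half_lt hε hz b n
        _ = 3 ^ b * (2 / ε) ^ n * |σ| ^ (b + n) * |z| ^ (a + b + n) := by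
            rw [abs_mul]
            ring
        _ ≤ _ := le_add_of_nonneg_left (by positivity)
  · rw [indicator_of_notMem (by exact hx), mul_zero]
    positivity

lemma integral_pow_eq_zero_of_odd (γ : Measure ℝ) [γ.IsNegInvariant] {a : ℕ} (ha : Odd a) :
    ∫ z, z ^ a ∂γ = 0 := by
  have h := integral_neg_eq_self (fun z : ℝ => z ^ a) γ
  simp only [ha.neg_pow, integral_neg] at h
  linarith

lemma integral_indicator_mixedShell_le {μ : Measure ℝ} {σ ε k D z : ℝ} (hk : 0 ≤ k) (hD : 0 ≤ D)
    (hshell : ∀ r, 0 ≤ r → r ≤ ε / 2 → μ.real {x | |(|x|) - ε| ≤ r} ≤ D * (r + k)) :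
    ∫ x, (mixedShell σ ε).indicator 1 (z, x) ∂μ ≤ D * (|σ| * |z| + k) := by
  rw [← abs_mul]
  rcases le_or_gt |σ * z| (ε / 2) with hz | hz
  · have hsection : (fun x => (mixedShell σ ε).indicator (1 : ℝ × ℝ → ℝ) (z, x))
        = indicator {x | |(|x|) - ε| ≤ |σ * z|} 1 := by
      ext x
      simp only [mixedShell, indicator_apply, mem_ofPred_eq, hz, true_and, Pi.one_apply]
    rw [hsection, integral_indicator_one (measurableSet_le (by fun_prop) measurable_const)]
    exact hshell _ (abs_nonneg _) hz
  · have hsection (x : ℝ) : (mixedShell σ ε).indicator (1 : ℝ × ℝ → ℝ) (z, x) = 0 :=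
      indicator_of_notMem (fun h => hz.not_ge h.1) _
    simp only [hsection, integral_zero]
    positivity

section Prod

variable {γ μ : Measure ℝ} [IsProbabilityMeasure μ]

lemma integrable_mul_indicator_mixedShell (hγ : ∀ n, Integrable (fun z => |z| ^ n) γ)
    (σ ε : ℝ) (a : ℕ) :
    Integrable (fun p => |p.1| ^ a * (mixedShell σ ε).indicator 1 p) (γ.prod μ) := by
  refine ((hγ a).comp_fst μ).mono' (Measurable.aestronglyMeasurable (.mul (by fun_prop)
    (measurable_one.indicator (measurableSet_mixedShell σ ε)))) (Eventually.of_forall fun p => ?_)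
  rw [norm_mul, norm_pow, Real.norm_eq_abs, abs_abs]
  exact mul_le_of_le_one_right (by positivity) ((norm_indicator_le_norm_self _ _).trans (by simp))

variable [SFinite γ]

lemma abs_integral_truncatedMonomial_le (hγ : ∀ n, Integrable (fun z => |z| ^ n) γ) {ε : ℝ}
    (hε : 0 < ε) (σ : ℝ) (a b n : ℕ) :
    |∫ p, truncatedMonomial σ ε a b p ∂(γ.prod μ)| ≤
      (∫ z, |z| ^ a ∂γ) * (∫ x in Metric.closedBall 0 (2 * ε), |x| ^ b ∂μ)
        + 3 ^ b * (2 / ε) ^ n * |σ| ^ (b + n) * ∫ z, |z| ^ (a + b + n) ∂γ := by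
  have hball : Integrable (indicator (Metric.closedBall 0 (2 * ε)) fun x : ℝ => |x| ^ b) μ :=
    (integrableOn_closedBall_of_continuous (by fun_prop)).integrable_indicator
      measurableSet_closedBall
  have hnear := (hγ a).mul_prod hball
  have htail := ((hγ (a + b + n)).comp_fst μ).const_mul (3 ^ b * (2 / ε) ^ n * |σ| ^ (b + n))
  calc |∫ p, truncatedMonomial σ ε a b p ∂(γ.prod μ)|
      ≤ ∫ p, (|p.1| ^ a * indicator (Metric.closedBall 0 (2 * ε)) (fun x => |x| ^ b) p.2
        + 3 ^ b * (2 / ε) ^ n * |σ| ^ (b + n) * |p.1| ^ (a + b + n)) ∂(γ.prod μ) := by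
        rw [← Real.norm_eq_abs]
        exact norm_integral_le_of_norm_le (hnear.add htail)
          (Eventually.of_forall fun p => abs_truncatedMonomial_le hε σ a b n p)
    _ = _ := by
        rw [integral_add hnear htail, integral_prod_mul (fun z : ℝ => |z| ^ a),
          integral_indicator measurableSet_closedBall, integral_const_mul,
          integral_fun_fst (fun z : ℝ => |z| ^ (a + b + n)), probReal_univ, one_smul]

lemma integral_mul_indicator_mixedShell_le (hγ : ∀ n, Integrable (fun z => |z| ^ n) γ)
    {σ ε k D : ℝ} (hk : 0 ≤ k) (hD : 0 ≤ D)
    (hshell : ∀ r, 0 ≤ r → r ≤ ε / 2 → μ.real {x | |(|x|) - ε| ≤ r} ≤ D * (r + k)) (a : ℕ) :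
    ∫ p, |p.1| ^ a * (mixedShell σ ε).indicator 1 p ∂(γ.prod μ) ≤
      D * (|σ| * (∫ z, |z| ^ (a + 1) ∂γ) + k * ∫ z, |z| ^ a ∂γ) := by
  have hint := integrable_mul_indicator_mixedShell (μ := μ) hγ σ ε a
  rw [integral_prod _ hint]
  calc ∫ z, ∫ x, |z| ^ a * (mixedShell σ ε).indicator 1 (z, x) ∂μ ∂γ
      ≤ ∫ z, D * (|σ| * |z| ^ (a + 1) + k * |z| ^ a) ∂γ := by
        refine integral_mono hint.integral_prod_left
          ((((hγ (a + 1)).const_mul _).add ((hγ a).const_mul _)).const_mul _) fun z => ?_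
        rw [integral_const_mul]
        calc _ ≤ |z| ^ a * (D * (|σ| * |z| + k)) := by
              gcongr
              exact integral_indicator_mixedShell_le hk hD hshell
          _ = _ := by ring
    _ = _ := by
        rw [integral_const_mul, integral_add ((hγ (a + 1)).const_mul _) ((hγ a).const_mul _),
          integral_const_mul, integral_const_mul]

/-- For odd `a` and symmetric `γ` the variant of the moment in which only `x` is truncated vanishes,
so only the disagreement of the two truncations contributes. -/
lemma abs_integral_truncatedMonomial_le_of_odd [γ.IsNegInvariant]
    (hγ : ∀ n, Integrable (fun z => |z| ^ n) γ) {σ ε k D : ℝ} (hε : 0 < ε) (hk : 0 ≤ k)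
    (hD : 0 ≤ D) (hshell : ∀ r, 0 ≤ r → r ≤ ε / 2 → μ.real {x | |(|x|) - ε| ≤ r} ≤ D * (r + k))
    {a : ℕ} (ha : Odd a) (b n : ℕ) :
    |∫ p, truncatedMonomial σ ε a b p ∂(γ.prod μ)| ≤
      (2 * ε) ^ b * (D * (|σ| * (∫ z, |z| ^ (a + 1) ∂γ) + k * ∫ z, |z| ^ a ∂γ))
        + 3 ^ b * (2 / ε) ^ n * |σ| ^ (b + n) * ∫ z, |z| ^ (a + b + n) ∂γ := by
  set f₀ : ℝ × ℝ → ℝ := fun p =>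
    p.1 ^ a * indicator (Metric.closedBall 0 ε) (fun x => x ^ b) p.2 with hf₀
  have hf₀_int : Integrable f₀ (γ.prod μ) :=
    ((hγ a).mono' (by fun_prop) (Eventually.of_forall fun z => (norm_pow z a).le)).mul_prod
      ((integrableOn_closedBall_of_continuous (by fun_prop)).integrable_indicator
        measurableSet_closedBall)
  have hf₀_zero : ∫ p, f₀ p ∂(γ.prod μ) = 0 := by
    rw [hf₀, integral_prod_mul (fun z : ℝ => z ^ a), integral_pow_eq_zero_of_odd γ ha, zero_mul]
  have hshell_int := (integrable_mul_indicator_mixedShell (μ := μ) hγ σ ε a).const_mul ((2 * ε) ^ b)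
  have htail_int := ((hγ (a + b + n)).comp_fst μ).const_mul (3 ^ b * (2 / ε) ^ n * |σ| ^ (b + n))
  have hle := abs_truncatedMonomial_sub_le hε σ a b n
  have hsub_int : Integrable (fun p => truncatedMonomial σ ε a b p - f₀ p) (γ.prod μ) :=
    (hshell_int.add htail_int).mono'
      ((measurable_truncatedMonomial σ ε a b).aestronglyMeasurable.sub hf₀_int.aestronglyMeasurable)
      (Eventually.of_forall hle)
  have hcancel : ∫ p, truncatedMonomial σ ε a b p ∂(γ.prod μ)
      = ∫ p, (truncatedMonomial σ ε a b p - f₀ p) ∂(γ.prod μ) := by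
    have h := integral_add hsub_int hf₀_int
    simpa only [sub_add_cancel, hf₀_zero, add_zero] using h
  rw [hcancel, ← Real.norm_eq_abs]
  refine (norm_integral_le_of_norm_le (hshell_int.add htail_int)
    (Eventually.of_forall hle)).trans ?_
  rw [integral_add' hshell_int htail_int, integral_const_mul, integral_const_mul,
    integral_fun_fst (fun z : ℝ => |z| ^ (a + b + n)), probReal_univ, one_smul]
  gcongr
  exact integral_mul_indicator_mixedShell_le hγ hk hD hshell a

end Prod

/-! ### Gaussian components and the small-time regime -/

lemma integrable_abs_pow_gaussianReal (m : ℝ) (v : ℝ≥0) (n : ℕ) :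
    Integrable (fun z => |z| ^ n) (gaussianReal m v) := by
  have h : MemLp id n (gaussianReal m v) := mod_cast memLp_id_gaussianReal (n : ℝ≥0)
  exact h.integrable_norm_pow'

lemma isNegInvariant_gaussianReal_zero (v : ℝ≥0) : (gaussianReal 0 v).IsNegInvariant :=
  ⟨gaussianReal_map_neg.trans (by rw [neg_zero])⟩

lemma gaussianReal_map_sqrt_mul {h : ℝ} (hh : 0 ≤ h) :
    (gaussianReal 0 1).map (fun z => √h * z) = gaussianReal 0 h.toNNReal := by
  rw [gaussianReal_map_const_mul, mul_zero, mul_one]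
  congr 1
  ext
  rw [NNReal.coe_mk, Real.sq_sqrt hh, Real.coe_toNNReal h hh]

lemma integral_abs_pow_gaussianReal {h : ℝ} (hh : 0 ≤ h) (n : ℕ) :
    ∫ z, |z| ^ n ∂(gaussianReal 0 h.toNNReal) = √h ^ n * ∫ z, |z| ^ n ∂(gaussianReal 0 1) := by
  rw [← gaussianReal_map_sqrt_mul hh, integral_map (by fun_prop) (by fun_prop),
    ← integral_const_mul]
  simp only [abs_mul, abs_of_nonneg (Real.sqrt_nonneg h), mul_pow]

/-- The mean of `Z ^ a * X ^ b` on `|σ * Z + X| ≤ ε`, for independent `Z` with law `N(0, h)` and `X`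
with law `μ`. -/
def gaussianMixedMoment (σ ε h : ℝ) (a b : ℕ) (μ : Measure ℝ) : ℝ :=
  ∫ p, truncatedMonomial σ ε a b p ∂((gaussianReal 0 h.toNNReal).prod μ)

lemma integral_eq_gaussianMixedMoment {Ω : Type*} [MeasurableSpace Ω] {P : Measure Ω}
    [IsProbabilityMeasure P] {W X : Ω → ℝ} (hWmeas : Measurable W)
    (hW : P.map W = gaussianReal 0 1) (hX : Measurable X) (hind : IndepFun W X P) {h : ℝ}
    (hh : 0 ≤ h) (σ ε : ℝ) (a b : ℕ) :
    ∫ ω, (√h * W ω) ^ a * X ω ^ b *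
        indicator {x : ℝ | |x| ≤ ε} (fun _ => (1 : ℝ)) (σ * √h * W ω + X ω) ∂P =
      gaussianMixedMoment σ ε h a b (P.map X) := by
  have hZmeas : Measurable fun ω => √h * W ω := by fun_prop
  have hZ : P.map (fun ω => √h * W ω) = gaussianReal 0 h.toNNReal := by
    rw [← gaussianReal_map_sqrt_mul hh, ← hW, Measure.map_map (by fun_prop) hWmeas]
    rfl
  have hind' : IndepFun (fun ω => √h * W ω) X P :=
    hind.comp (φ := fun w => √h * w) (by fun_prop) measurable_id
  rw [gaussianMixedMoment, ← hZ, ← (indepFun_iff_map_prod_eq_prod_map_map hZmeas.aemeasurable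
    hX.aemeasurable).1 hind', integral_map (hZmeas.prodMk hX).aemeasurable
    (measurable_truncatedMonomial σ ε a b).aestronglyMeasurable]
  simp only [truncatedMonomial, mul_assoc]

lemma rpow_natCast_div_two {h : ℝ} (hh : 0 ≤ h) (n : ℕ) : h ^ ((n : ℝ) / 2) = √h ^ n := by
  rw [Real.sqrt_eq_rpow, ← Real.rpow_mul_natCast hh]
  ring_nf

section Threshold

variable {ε : ℝ → ℝ} {δ : ℝ}

lemma eventually_sqrt_div_le_rpow (hε : ∀ᶠ h in 𝓝[>] (0 : ℝ), h ^ (1 / 2 - δ) ≤ ε h) :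
    ∀ᶠ h in 𝓝[>] (0 : ℝ), 0 < ε h ∧ √h / ε h ≤ h ^ δ := by
  filter_upwards [self_mem_nhdsWithin, hε] with h (hh : 0 < h) hle
  have hεh : 0 < ε h := (Real.rpow_pos_of_pos hh _).trans_le hle
  refine ⟨hεh, (div_le_iff₀ hεh).2 ?_⟩
  calc √h = h ^ δ * h ^ (1 / 2 - δ) := by
        rw [← Real.rpow_add hh, add_sub_cancel, Real.sqrt_eq_rpow]
    _ ≤ h ^ δ * ε h := by gcongr

lemma exists_eventually_sqrt_div_pow_le (hδ : 0 < δ)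
    (hε : ∀ᶠ h in 𝓝[>] (0 : ℝ), h ^ (1 / 2 - δ) ≤ ε h) :
    ∃ n : ℕ, ∀ᶠ h in 𝓝[>] (0 : ℝ), (√h / ε h) ^ n ≤ h ^ 2 := by
  obtain ⟨n, hn⟩ := exists_nat_ge (2 / δ)
  have hδn : 2 ≤ δ * n := (div_le_iff₀' hδ).1 hn
  refine ⟨n, ?_⟩
  filter_upwards [self_mem_nhdsWithin, nhdsWithin_le_nhds (Iic_mem_nhds zero_lt_one),
    eventually_sqrt_div_le_rpow hε] with h (hh : 0 < h) (hh1 : h ≤ 1) ⟨hεh, hle⟩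
  calc (√h / ε h) ^ n ≤ (h ^ δ) ^ n := by gcongr
    _ = h ^ (δ * n) := (Real.rpow_mul_natCast hh.le δ n).symm
    _ ≤ h ^ (2 : ℝ) := Real.rpow_le_rpow_of_exponent_ge hh hh1 hδn
    _ = h ^ 2 := Real.rpow_two h

lemma eventually_threshold (hδ : 0 < δ) (hε : ∀ᶠ h in 𝓝[>] (0 : ℝ), h ^ (1 / 2 - δ) ≤ ε h)
    (hε0 : Tendsto ε (𝓝[>] (0 : ℝ)) (𝓝 0)) :
    ∀ᶠ h in 𝓝[>] (0 : ℝ), (0 < h ∧ h ≤ 1) ∧ (0 < ε h ∧ 2 * ε h ≤ 1) ∧ √h ≤ ε h := by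
  filter_upwards [self_mem_nhdsWithin, nhdsWithin_le_nhds (Iic_mem_nhds zero_lt_one),
    eventually_sqrt_div_le_rpow hε, hε0.eventually (Iic_mem_nhds one_half_pos)]
    with h (hh : 0 < h) (hh1 : h ≤ 1) ⟨hεh, hle⟩ (hεle : ε h ≤ 1 / 2)
  refine ⟨⟨hh, hh1⟩, ⟨hεh, by linarith⟩, (div_le_one hεh).1 ?_⟩
  exact hle.trans (Real.rpow_le_one hh.le hh1 hδ.le)

/-- On `|σ * z| > ε / 2` the Gaussian moments of high order gain arbitrarily many powers of
`√h / ε ≤ h ^ δ`. -/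
lemma isBigO_gaussian_tail (hδ : 0 < δ) (hε : ∀ᶠ h in 𝓝[>] (0 : ℝ), h ^ (1 / 2 - δ) ≤ ε h)
    (σ : ℝ) (a b : ℕ) :
    ∃ n : ℕ, (fun h => 3 ^ b * (2 / ε h) ^ n * |σ| ^ (b + n)
        * ∫ z, |z| ^ (a + b + n) ∂(gaussianReal 0 h.toNNReal))
      =O[𝓝[>] (0 : ℝ)] fun h => √h ^ (a + b) * h ^ 2 := by
  obtain ⟨n, hn⟩ := exists_eventually_sqrt_div_pow_le hδ hε
  set m := ∫ z, |z| ^ (a + b + n) ∂(gaussianReal 0 1)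
  refine ⟨n, IsBigO.of_bound (3 ^ b * 2 ^ n * |σ| ^ (b + n) * m) ?_⟩
  filter_upwards [self_mem_nhdsWithin, hn, eventually_sqrt_div_le_rpow hε]
    with h (hh : 0 < h) hle ⟨hεh, _⟩
  rw [integral_abs_pow_gaussianReal hh.le, Real.norm_of_nonneg (by positivity),
    Real.norm_of_nonneg (by positivity)]
  calc 3 ^ b * (2 / ε h) ^ n * |σ| ^ (b + n) * (√h ^ (a + b + n) * m)
      = 3 ^ b * 2 ^ n * |σ| ^ (b + n) * m * (√h ^ (a + b) * (√h / ε h) ^ n) := by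
        rw [div_pow, div_pow]
        ring
    _ ≤ 3 ^ b * 2 ^ n * |σ| ^ (b + n) * m * (√h ^ (a + b) * h ^ 2) := by gcongr

lemma isBigO_gaussianMixedMoment {μ : ℝ → Measure ℝ}
    (hμ : ∀ t, 0 < t → IsProbabilityMeasure (μ t)) (hδ : 0 < δ)
    (hε : ∀ᶠ h in 𝓝[>] (0 : ℝ), h ^ (1 / 2 - δ) ≤ ε h) (σ : ℝ) (a b : ℕ) :
    (fun h => gaussianMixedMoment σ (ε h) h a b (μ h)) =O[𝓝[>] (0 : ℝ)] fun h =>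
      √h ^ a * (∫ x in Metric.closedBall 0 (2 * ε h), |x| ^ b ∂(μ h)) + √h ^ (a + b) * h ^ 2 := by
  obtain ⟨n, htail⟩ := isBigO_gaussian_tail hδ hε σ a b
  obtain ⟨T, hT⟩ := htail.bound
  set m := ∫ z, |z| ^ a ∂(gaussianReal 0 1)
  refine IsBigO.of_bound (max m T) ?_
  filter_upwards [self_mem_nhdsWithin, hT, eventually_sqrt_div_le_rpow hε]
    with h (hh : 0 < h) hle ⟨hεh, _⟩
  have := hμ h hh
  have hV : 0 ≤ ∫ x in Metric.closedBall 0 (2 * ε h), |x| ^ b ∂(μ h) :=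
    integral_nonneg fun x => by positivity
  have hbound := abs_integral_truncatedMonomial_le (μ := μ h)
    (integrable_abs_pow_gaussianReal 0 h.toNNReal) hεh σ a b n
  rw [integral_abs_pow_gaussianReal hh.le a] at hbound
  rw [Real.norm_of_nonneg (r := √h ^ (a + b) * h ^ 2) (by positivity)] at hle
  rw [Real.norm_eq_abs (gaussianMixedMoment _ _ _ _ _ _), Real.norm_of_nonneg (by positivity),
    mul_add]
  refine hbound.trans (add_le_add ?_ ((Real.le_norm_self _).trans (hle.trans ?_)))
  · rw [mul_right_comm, mul_comm]
    gcongr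
    exact le_max_left m T
  · gcongr
    exact le_max_right m T

/-- The common form of the two estimates without cancellation: `d = 1` comes from the second moment
of the process, `d = 1 / 2` from the AM-GM inequality. -/
lemma isBigO_gaussianMixedMoment_of_setIntegral_le {μ : ℝ → Measure ℝ}
    (hμ : ∀ t, 0 < t → IsProbabilityMeasure (μ t)) (hδ : 0 < δ)
    (hε : ∀ᶠ h in 𝓝[>] (0 : ℝ), h ^ (1 / 2 - δ) ≤ ε h) (hε0 : Tendsto ε (𝓝[>] (0 : ℝ)) (𝓝 0))
    (σ : ℝ) (a : ℕ) {b : ℕ} {C d e : ℝ} (hd : d ≤ 2) (he : e ≤ b)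
    (hV : ∀ s, 0 < s → s ≤ 1 → ∀ t, 0 < t →
      ∫ y in Metric.closedBall 0 s, |y| ^ b ∂(μ t) ≤ C * (t ^ d * s ^ e)) :
    (fun h => gaussianMixedMoment σ (ε h) h a b (μ h)) =O[𝓝[>] (0 : ℝ)]
      fun h => h ^ (d + a / 2) * ε h ^ e := by
  refine (isBigO_gaussianMixedMoment hμ hδ hε σ a b).trans (.of_bound (C * 2 ^ e + 1) ?_)
  filter_upwards [eventually_threshold hδ hε hε0] with h ⟨⟨hh, hh1⟩, ⟨hεh, hε1⟩, hle⟩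
  rw [Real.norm_of_nonneg (by positivity), Real.norm_of_nonneg (by positivity), add_one_mul,
    Real.rpow_add hh, rpow_natCast_div_two hh.le]
  refine add_le_add ?_ ?_
  · calc √h ^ a * ∫ x in Metric.closedBall 0 (2 * ε h), |x| ^ b ∂(μ h)
        ≤ √h ^ a * (C * (h ^ d * (2 * ε h) ^ e)) := by
          gcongr
          exact hV _ (by positivity) hε1 h hh
      _ = C * 2 ^ e * (h ^ d * √h ^ a * ε h ^ e) := by
          rw [Real.mul_rpow two_pos.le hεh.le]
          ring
  · calc √h ^ (a + b) * h ^ 2 = √h ^ a * √h ^ b * h ^ (2 : ℝ) := by rw [pow_add, Real.rpow_two]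
      _ ≤ √h ^ a * ε h ^ b * h ^ d := by
          gcongr ?_ * ?_
          · gcongr
          · exact Real.rpow_le_rpow_of_exponent_ge hh hh1 hd
      _ ≤ √h ^ a * ε h ^ e * h ^ d := by
          rw [← Real.rpow_natCast (ε h)]
          gcongr ?_ * ?_ * ?_
          exact Real.rpow_le_rpow_of_exponent_ge hεh (by linarith) he
      _ = h ^ d * √h ^ a * ε h ^ e := by ring

end Threshold

section SmallTime

variable {Y b₀ : ℝ} {ν : Measure ℝ} [SFinite ν] {c : ℝ≥0} {μ : ℝ → Measure ℝ} {ε : ℝ → ℝ} {δ : ℝ}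

lemma isBigO_gaussianMixedMoment_of_odd (hμ : HasLevyExponent μ (levyExponent b₀ ν))
    (hν : ν ≤ c • stableMeasure Y) (hY1 : 1 < Y) (hY2 : Y < 2) (hδ : 0 < δ)
    (hε : ∀ᶠ h in 𝓝[>] (0 : ℝ), h ^ (1 / 2 - δ) ≤ ε h) (σ : ℝ) {a : ℕ} (ha : Odd a) (b : ℕ) :
    (fun h => gaussianMixedMoment σ (ε h) h a b (μ h)) =O[𝓝[>] (0 : ℝ)] fun h =>
      √h ^ (a + 1) * (h * ε h ^ (b - 1 - Y)) + √h ^ (a + b) * h ^ 2 := by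
  obtain ⟨C, hC, hshell⟩ := hμ.exists_measureReal_shell_le hν hY1 hY2
  obtain ⟨n, htail⟩ := isBigO_gaussian_tail hδ hε σ a b
  obtain ⟨T, hT⟩ := htail.bound
  set M := |σ| * (∫ z, |z| ^ (a + 1) ∂(gaussianReal 0 1)) + ∫ z, |z| ^ a ∂(gaussianReal 0 1)
  refine IsBigO.of_bound (max (2 ^ b * C * M) T) ?_
  filter_upwards [self_mem_nhdsWithin, nhdsWithin_le_nhds (Iic_mem_nhds zero_lt_one), hT,
    eventually_sqrt_div_le_rpow hε] with h (hh : 0 < h) (hh1 : h ≤ 1) hle ⟨hεh, _⟩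
  have := hμ.isProbabilityMeasure h hh
  have := isNegInvariant_gaussianReal_zero h.toNNReal
  have hbound := abs_integral_truncatedMonomial_le_of_odd (μ := μ h)
    (integrable_abs_pow_gaussianReal 0 h.toNNReal) (σ := σ) (k := √h)
    (D := C * (h * ε h ^ (-1 - Y))) hεh h.sqrt_nonneg (by positivity)
    (fun r hr hrε => (hshell h hh hh1 (ε h) r hεh hr hrε).trans_eq (by ring)) ha b n
  rw [integral_abs_pow_gaussianReal hh.le (a + 1), integral_abs_pow_gaussianReal hh.le a] at hbound
  rw [Real.norm_of_nonneg (r := √h ^ (a + b) * h ^ 2) (by positivity)] at hle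
  rw [Real.norm_eq_abs (gaussianMixedMoment _ _ _ _ _ _), Real.norm_of_nonneg (by positivity),
    mul_add]
  refine hbound.trans (add_le_add ?_ ((Real.le_norm_self _).trans (hle.trans ?_)))
  · calc _ = 2 ^ b * C * M * (√h ^ (a + 1) * (h * ε h ^ (b - 1 - Y))) := by
          rw [show (b : ℝ) - 1 - Y = b + (-1 - Y) by ring, Real.rpow_add hεh, Real.rpow_natCast]
          ring
      _ ≤ _ := by
          gcongr
          exact le_max_left _ T
  · gcongr
    exact le_max_right _ T

theorem isBigO_gaussianMixedMoment_sq_mul_rpow (hμ : HasLevyExponent μ (levyExponent b₀ ν))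
    (hν : ν ≤ c • stableMeasure Y) (hY1 : 1 < Y) (hY2 : Y < 2) (hδ : 0 < δ)
    (hε : ∀ᶠ h in 𝓝[>] (0 : ℝ), h ^ (1 / 2 - δ) ≤ ε h) (hε0 : Tendsto ε (𝓝[>] (0 : ℝ)) (𝓝 0))
    (σ : ℝ) {a : ℕ} (ha : Odd a) (b : ℕ) :
    (fun h => gaussianMixedMoment σ (ε h) h a b (μ h)) =O[𝓝[>] (0 : ℝ)]
      fun h => h ^ 2 * ε h ^ ((a : ℝ) + b - Y - 2) := by
  obtain ⟨n, rfl⟩ : ∃ n, a = n + 1 := Nat.exists_eq_add_of_le' ha.pos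
  refine (isBigO_gaussianMixedMoment_of_odd hμ hν hY1 hY2 hδ hε σ ha b).trans (.of_bound 2 ?_)
  filter_upwards [eventually_threshold hδ hε hε0] with h ⟨⟨hh, _⟩, ⟨hεh, hε1⟩, hle⟩
  rw [Real.norm_of_nonneg (by positivity), Real.norm_of_nonneg (by positivity), two_mul]
  refine add_le_add ?_ ?_
  · calc √h ^ (n + 1 + 1) * (h * ε h ^ (b - 1 - Y)) = √h ^ n * √h ^ 2 * h * ε h ^ (b - 1 - Y) := by
          ring
      _ ≤ ε h ^ n * √h ^ 2 * h * ε h ^ (b - 1 - Y) := by gcongr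
      _ = h ^ 2 * ε h ^ (((n + 1 : ℕ) : ℝ) + b - Y - 2) := by
          rw [show ((n + 1 : ℕ) : ℝ) + b - Y - 2 = n + (b - 1 - Y) by push_cast; ring,
            Real.rpow_add hεh, Real.rpow_natCast, Real.sq_sqrt hh.le]
          ring
  · calc √h ^ (n + 1 + b) * h ^ 2 ≤ ε h ^ (n + 1 + b) * h ^ 2 := by gcongr
      _ = h ^ 2 * ε h ^ ((n + 1 + b : ℕ) : ℝ) := by rw [Real.rpow_natCast, mul_comm]
      _ ≤ h ^ 2 * ε h ^ (((n + 1 : ℕ) : ℝ) + b - Y - 2) := by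
          have : ((n + 1 : ℕ) : ℝ) + b - Y - 2 ≤ ((n + 1 + b : ℕ) : ℝ) := by
            push_cast
            linarith
          gcongr ?_ * ?_
          exact Real.rpow_le_rpow_of_exponent_ge hεh (by linarith) this

end SmallTime

/-! ### Tempered stable jump measures -/

lemma levyDensity_le {Y Cp Cm M : ℝ} {q : ℝ → ℝ} (hCp : 0 ≤ Cp) (hCm : 0 ≤ Cm)
    (hq : ∀ x, 0 ≤ q x) (hM : ∀ x, q x ≤ M) (x : ℝ) :
    levyDensity Y Cp Cm q x ≤ (Cp + Cm) * M * |x| ^ (-1 - Y) := by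
  unfold levyDensity
  have hqx := hq x
  have hMx := hM x
  gcongr
  split_ifs <;> linarith

lemma levyMeasure_le {Y Cp Cm M : ℝ} {q : ℝ → ℝ} (hCp : 0 ≤ Cp) (hCm : 0 ≤ Cm)
    (hq : ∀ x, 0 ≤ q x) (hM : ∀ x, q x ≤ M) :
    levyMeasure Y Cp Cm q ≤ ((Cp + Cm) * M).toNNReal • stableMeasure Y := by
  have hM0 : 0 ≤ (Cp + Cm) * M := mul_nonneg (by positivity) ((hq 0).trans (hM 0))
  refine (withDensity_mono (ae_of_all _ fun x => ?_)).trans_eq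
    (withDensity_smul (((Cp + Cm) * M).toNNReal : ℝ≥0∞) (by fun_prop))
  rw [Pi.smul_apply, smul_eq_mul, ← ENNReal.ofReal, ← ENNReal.ofReal_mul hM0]
  exact ENNReal.ofReal_le_ofReal (levyDensity_le hCp hCm hq hM x)

instance (Y Cp Cm : ℝ) (q : ℝ → ℝ) : SFinite (levyMeasure Y Cp Cm q) := by
  unfold levyMeasure
  infer_instance

lemma hasLevyExponent_map {Ω : Type*} [MeasurableSpace Ω] {P : Measure Ω} [IsProbabilityMeasure P]
    {ψ : ℝ → ℂ} {J : ℝ → Ω → ℝ} (hJmeas : ∀ h, Measurable (J h))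
    (hJ : ∀ h, 0 < h → ∀ u : ℝ,
      ∫ ω, Complex.exp (Complex.I * u * J h ω) ∂P = Complex.exp (h * ψ u)) :
    HasLevyExponent (fun h => P.map (J h)) ψ where
  isProbabilityMeasure h _ := Measure.isProbabilityMeasure_map (hJmeas h).aemeasurable
  charFun_eq h hh u := by
    rw [charFun_apply_real, integral_map (hJmeas h).aemeasurable (by fun_prop), ← hJ h hh u]
    simp only [mul_comm, mul_left_comm]

theorem truncated_mixed_moments_general {Ω : Type*} [MeasurableSpace Ω] {P : Measure Ω}
    [IsProbabilityMeasure P] {Y b₀ : ℝ} (hY1 : 1 < Y) (hY2 : Y < 2) {ν : Measure ℝ} [SFinite ν]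
    {c : ℝ≥0} (hν : ν ≤ c • stableMeasure Y) {J : ℝ → Ω → ℝ} {W : Ω → ℝ}
    (hWmeas : Measurable W) (hW : P.map W = gaussianReal 0 1) (hJmeas : ∀ h, Measurable (J h))
    (hJ : HasLevyExponent (fun h => P.map (J h)) (levyExponent b₀ ν))
    (hindep : ∀ h, 0 < h → IndepFun W (J h) P) {ε : ℝ → ℝ}
    (hε0 : Tendsto ε (𝓝[>] (0 : ℝ)) (𝓝 0)) {δ : ℝ} (hδ : 0 < δ)
    (hε : ∀ᶠ h in 𝓝[>] (0 : ℝ), h ^ (1 / 2 - δ) ≤ ε h) (σ : ℝ) (a b : ℕ) :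
    let I : ℝ → ℝ := fun h => ∫ ω, (√h * W ω) ^ a * J h ω ^ b *
      indicator {x : ℝ | |x| ≤ ε h} (fun _ => (1 : ℝ)) (σ * √h * W ω + J h ω) ∂P
    (Odd a → I =O[𝓝[>] (0 : ℝ)] fun h => h ^ 2 * ε h ^ ((a : ℝ) + b - Y - 2)) ∧
    (2 ≤ b → I =O[𝓝[>] (0 : ℝ)] fun h => h ^ (1 + (a : ℝ) / 2) * ε h ^ ((b : ℝ) - Y)) ∧
    (1 ≤ b → I =O[𝓝[>] (0 : ℝ)] fun h => h ^ ((1 + (a : ℝ)) / 2) * ε h ^ ((b : ℝ) - Y / 2)) := by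
  intro I
  have hI : I =ᶠ[𝓝[>] 0] fun h => gaussianMixedMoment σ (ε h) h a b (P.map (J h)) := by
    filter_upwards [self_mem_nhdsWithin] with h (hh : 0 < h)
    exact integral_eq_gaussianMixedMoment hWmeas hW (hJmeas h) (hindep h hh) hh.le σ (ε h) a b
  refine ⟨fun ha => ?_, fun hb => ?_, fun hb => ?_⟩
  · exact hI.trans_isBigO (isBigO_gaussianMixedMoment_sq_mul_rpow hJ hν hY1 hY2 hδ hε hε0 σ ha b)
  · obtain ⟨C, hV⟩ := hJ.exists_setIntegral_abs_pow_le hν hY1 hY2 hb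
    refine hI.trans_isBigO (isBigO_gaussianMixedMoment_of_setIntegral_le (C := C)
      hJ.isProbabilityMeasure hδ hε hε0 σ a one_le_two (by linarith) fun s hs hs1 t ht => ?_)
    simpa only [Real.rpow_one] using hV s hs hs1 t ht
  · obtain ⟨C, hV⟩ := hJ.exists_setIntegral_abs_pow_le_sqrt hν hY1 hY2 hb
    simp only [add_div]
    refine hI.trans_isBigO (isBigO_gaussianMixedMoment_of_setIntegral_le (C := C)
      hJ.isProbabilityMeasure hδ hε hε0 σ a (by norm_num) (by linarith) fun s hs hs1 t ht => ?_)
    simpa only [Real.sqrt_eq_rpow] using hV s hs hs1 t ht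

/-- Lemma C.6: estimates for the truncated mixed moments
`E(W_h^a J_h^b 1_{|σW_h + J_h| ≤ ε})`, depending on the parities of `a` and `b`. -/
theorem truncated_mixed_moments
    {Ω : Type*} [MeasurableSpace Ω] (P : Measure Ω) [IsProbabilityMeasure P]
    (Y Cp Cm σ b₀ : ℝ) (q : ℝ → ℝ)
    (hY1 : 1 < Y) (hY2 : Y < 2)
    (hCp : 0 < Cp) (hCm : 0 < Cm) (hσ : 0 < σ)
    (hq_meas : Measurable q) (hq_nonneg : ∀ x, 0 ≤ q x)
    (hq_bdd : ∃ M : ℝ, ∀ x, q x ≤ M)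
    (hq_lim : Tendsto q (𝓝[≠] (0 : ℝ)) (𝓝 1))
    (hq_taylor : ∃ αp αm : ℝ, αp ≠ 0 ∧ αm ≠ 0 ∧
      IntegrableOn (fun x => |q x - 1 - αp * x| * x ^ (-Y - 1)) (Set.Ioc (0 : ℝ) 1) ∧
      IntegrableOn (fun x => |q x - 1 - αm * x| * |x| ^ (-Y - 1)) (Set.Ico (-1 : ℝ) 0))
    (hq_log : ∃ K M : ℝ, ∀ x : ℝ, M ≤ |x| → |Real.log (q x)| ≤ K * |x|)
    (hq_inf : ∀ ε : ℝ, 0 < ε → ∃ c : ℝ, 0 < c ∧ ∀ x : ℝ, x ≠ 0 → |x| < ε → c ≤ q x)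
    (hq_sq : IntegrableOn (fun x => q x ^ 2 * |x| ^ (-1 - Y)) {x : ℝ | 1 < |x|})
    -- the jump part `J` and the Brownian part `W`
    (J : ℝ → Ω → ℝ) (W : Ω → ℝ)
    (hWmeas : Measurable W) (hW : P.map W = gaussianReal 0 1)
    (hJmeas : ∀ h : ℝ, Measurable (J h))
    (hJcf : ∀ h : ℝ, 0 < h → ∀ u : ℝ,
      ∫ ω, Complex.exp (Complex.I * u * J h ω) ∂P = Complex.exp (h * psiJ b₀ Y Cp Cm q u))
    (hindep : ∀ h : ℝ, 0 < h → IndepFun W (J h) P)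
    (a b : ℕ) (ha : 1 ≤ a) (hb : 1 ≤ b)
    -- the threshold `ε = ε(h)`
    (ε : ℝ → ℝ) (hεpos : ∀ h : ℝ, 0 < h → 0 < ε h)
    (hε0 : Tendsto ε (𝓝[>] (0 : ℝ)) (𝓝 0))
    (δbar : ℝ) (hδ1 : 0 < δbar) (hδ2 : δbar < 1 / 2)
    (hεlow : ∀ᶠ h in 𝓝[>] (0 : ℝ), h ^ (1 / 2 - δbar) ≤ ε h) :
    (Odd a →
      ∃ R₁ R₂ : ℝ → ℝ,
        (∀ h : ℝ, 0 < h →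
          (∫ ω, (Real.sqrt h * W ω) ^ a * (J h ω) ^ b *
              Set.indicator {x : ℝ | |x| ≤ ε h} (fun _ => (1 : ℝ))
                (σ * Real.sqrt h * W ω + J h ω) ∂P) = R₁ h + R₂ h) ∧
        R₁ =O[𝓝[>] (0 : ℝ)] (fun h => h ^ 2 * ε h ^ ((a : ℝ) + b - Y - 2)) ∧
        R₂ =O[𝓝[>] (0 : ℝ)] (fun h => h ^ (1 + (a : ℝ) / 2) * ε h ^ ((b : ℝ) - Y / 2))) ∧
    (Even a → Even b →
      ∃ R₁ R₂ : ℝ → ℝ,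
        (∀ h : ℝ, 0 < h →
          (∫ ω, (Real.sqrt h * W ω) ^ a * (J h ω) ^ b *
              Set.indicator {x : ℝ | |x| ≤ ε h} (fun _ => (1 : ℝ))
                (σ * Real.sqrt h * W ω + J h ω) ∂P) = R₁ h + R₂ h) ∧
        R₁ =O[𝓝[>] (0 : ℝ)] (fun h => h ^ 2 * ε h ^ ((a : ℝ) + b - Y - 2)) ∧
        R₂ =O[𝓝[>] (0 : ℝ)] (fun h => h ^ (1 + (a : ℝ) / 2) * ε h ^ ((b : ℝ) - Y))) ∧
    (Even a → Odd b →
      ∃ R₁ R₂ : ℝ → ℝ,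
        (∀ h : ℝ, 0 < h →
          (∫ ω, (Real.sqrt h * W ω) ^ a * (J h ω) ^ b *
              Set.indicator {x : ℝ | |x| ≤ ε h} (fun _ => (1 : ℝ))
                (σ * Real.sqrt h * W ω + J h ω) ∂P) = R₁ h + R₂ h) ∧
        R₁ =O[𝓝[>] (0 : ℝ)] (fun h => h ^ 2 * ε h ^ ((a : ℝ) + b - Y - 2)) ∧
        R₂ =O[𝓝[>] (0 : ℝ)]
          (fun h => h ^ ((1 + (a : ℝ)) / 2) * ε h ^ ((b : ℝ) - Y / 2))) := by
  obtain ⟨M, hM⟩ := hq_bdd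
  obtain ⟨hodd, htwo, hone⟩ := truncated_mixed_moments_general hY1 hY2
    (levyMeasure_le hCp.le hCm.le hq_nonneg hM) hWmeas hW hJmeas (hasLevyExponent_map hJmeas hJcf)
    hindep hε0 hδ1 hεlow σ a b
  refine ⟨fun ha' => ?_, fun _ hb' => ?_, fun _ _ => ?_⟩
  · exact ⟨_, fun _ => 0, fun h _ => (add_zero _).symm, hodd ha', isBigO_zero _ _⟩
  · have hb2 : 2 ≤ b := Nat.le_of_dvd hb hb'.two_dvd
    exact ⟨fun _ => 0, _, fun h _ => (zero_add _).symm, isBigO_zero _ _, htwo hb2⟩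
  · exact ⟨fun _ => 0, _, fun h _ => (zero_add _).symm, isBigO_zero _ _, hone hb⟩

end
end

section
/- Let S be a real random variable with Lebesgue density p_S and characteristic function E[exp(iuS)] = exp(−ς^Y|u|^Y(1 − iβ·sgn(u)·tan(πY/2))) for all u ∈ ℝ, and suppose that for some constant K and all z > 0, |p_S(z) − C₊·z^{−Y−1}| ≤ K·(z^{−Y−1} ∧ z^{−2Y−1}) and |p_S(−z) − C₋·z^{−Y−1}| ≤ K·(z^{−Y−1} ∧ z^{−2Y−1}). Define D(u) := p_S(u) − (C₋·1_{u<0} + C₊·1_{u>0})·|u|^{−1−Y}. Then the function u ↦ u²·D(u) is Lebesgue integrable on ℝ and ∫_ℝ u²·D(u) du = 0. -/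
open MeasureTheory ProbabilityTheory Filter Asymptotics Set
open scoped Topology NNReal ENNReal Real

noncomputable section

/-- Characteristic function of the strictly `Y`-stable variable `S`. -/
def stableCF (Y Cp Cm : ℝ) (u : ℝ) : ℂ := Complex.exp (-stablePart Y Cp Cm u)

/-- Standard normal density `φ`. -/
def gaussDensity (x : ℝ) : ℝ := (Real.sqrt (2 * π))⁻¹ * Real.exp (-x ^ 2 / 2)

/-!
Write `n` for the Lévy density, so that `D = p - n`. As `u → 0⁺`, the quotient
`u⁻² ∫ (1 - cos (u x)) D(x) dx` tends to half the second moment of `D`. On the other hand `n` is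
homogeneous, so `∫ (1 - cos (u x)) n(x) dx = B u ^ Y`, while the characteristic function gives
`∫ (1 - cos (u x)) p(x) dx = a u ^ Y + O(u ^ (2 Y))` with `2 < 2 Y`. Hence `(a - B) u ^ (Y - 2)` has
a finite limit; because `Y < 2` this forces `a = B`, without evaluating either constant, and the
limit is zero.
-/

/-- The Lévy density `(C₋·1_{x<0} + C₊·1_{x>0})·|x|^{−1−Y}` of the strictly `Y`-stable law, which
is the leading term of the tails of its probability density. -/
def stableLevyDensity (Y Cp Cm x : ℝ) : ℝ :=
  (if x < 0 then Cm else if 0 < x then Cp else 0) * |x| ^ (-1 - Y)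

section Integrability

lemma integrableOn_Ioi_min_rpow {s t : ℝ} (hs : -1 < s) (ht : t < -1) :
    IntegrableOn (fun x : ℝ ↦ min (x ^ s) (x ^ t)) (Ioi 0) := by
  have hmeas : Measurable fun x : ℝ ↦ min (x ^ s) (x ^ t) := by fun_prop
  have hnorm {x : ℝ} (hx : 0 < x) : ‖min (x ^ s) (x ^ t)‖ = min (x ^ s) (x ^ t) :=
    Real.norm_of_nonneg (by positivity)
  have hnear : IntegrableOn (fun x : ℝ ↦ x ^ s) (Ioc 0 1) :=
    (intervalIntegrable_iff_integrableOn_Ioc_of_le zero_le_one).1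
      (intervalIntegral.intervalIntegrable_rpow' hs)
  have hfar : IntegrableOn (fun x : ℝ ↦ x ^ t) (Ioi 1) := integrableOn_Ioi_rpow_of_lt ht one_pos
  rw [← Ioc_union_Ioi_eq_Ioi (zero_le_one : (0 : ℝ) ≤ 1)]
  refine IntegrableOn.union (hnear.mono' hmeas.aestronglyMeasurable ?_)
    (hfar.mono' hmeas.aestronglyMeasurable ?_)
  · filter_upwards [ae_restrict_mem measurableSet_Ioc] with x hx
    exact (hnorm hx.1).trans_le (min_le_left _ _)
  · filter_upwards [ae_restrict_mem measurableSet_Ioi] with x hx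
    exact (hnorm (one_pos.trans hx)).trans_le (min_le_right _ _)

lemma integrable_min_abs_rpow {s t : ℝ} (hs : -1 < s) (ht : t < -1) :
    Integrable fun x : ℝ ↦ min (|x| ^ s) (|x| ^ t) := by
  have h := integrable_fun_norm_addHaar (volume : Measure ℝ) (f := fun r ↦ min (r ^ s) (r ^ t))
  simp only [Module.finrank_self, Nat.sub_self, pow_zero, one_smul, Real.norm_eq_abs] at h
  exact h.2 (integrableOn_Ioi_min_rpow hs ht)

lemma sq_mul_abs_rpow {x : ℝ} (hx : x ≠ 0) (s : ℝ) : x ^ 2 * |x| ^ s = |x| ^ (s + 2) := by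
  rw [Real.rpow_add (abs_pos.2 hx), Real.rpow_two, sq_abs, mul_comm]

lemma integrable_sq_mul_of_abs_le_min_rpow {f : ℝ → ℝ} {K s t : ℝ} (hs : -3 < s) (ht : t < -3)
    (hf : AEStronglyMeasurable f) (hK : ∀ x ≠ 0, |f x| ≤ K * min (|x| ^ s) (|x| ^ t)) :
    Integrable fun x ↦ x ^ 2 * f x := by
  have hdom : Integrable fun x : ℝ ↦ K * min (|x| ^ (s + 2)) (|x| ^ (t + 2)) :=
    (integrable_min_abs_rpow (by linarith) (by linarith)).const_mul K
  refine hdom.mono' (by fun_prop) ?_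
  filter_upwards [Measure.ae_ne volume 0] with x hx
  calc ‖x ^ 2 * f x‖ = x ^ 2 * |f x| := by rw [norm_mul, Real.norm_of_nonneg (sq_nonneg x)]; rfl
    _ ≤ x ^ 2 * (K * min (|x| ^ s) (|x| ^ t)) := by gcongr; exact hK x hx
    _ = K * min (|x| ^ (s + 2)) (|x| ^ (t + 2)) := by
      rw [mul_left_comm, mul_min_of_nonneg _ _ (sq_nonneg x), sq_mul_abs_rpow hx,
        sq_mul_abs_rpow hx]

end Integrability

section StableLevyDensity

variable {Y Cp Cm : ℝ}

lemma stableLevyDensity_of_pos {x : ℝ} (hx : 0 < x) :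
    stableLevyDensity Y Cp Cm x = Cp * x ^ (-Y - 1) := by
  rw [stableLevyDensity, if_neg hx.not_gt, if_pos hx, abs_of_pos hx, neg_sub_comm]

lemma stableLevyDensity_neg_of_pos {x : ℝ} (hx : 0 < x) :
    stableLevyDensity Y Cp Cm (-x) = Cm * x ^ (-Y - 1) := by
  rw [stableLevyDensity, if_pos (neg_neg_of_pos hx), abs_neg, abs_of_pos hx, neg_sub_comm]

@[fun_prop]
lemma measurable_stableLevyDensity : Measurable (stableLevyDensity Y Cp Cm) := by
  refine Measurable.mul ?_ (by fun_prop)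
  exact Measurable.ite measurableSet_Iio measurable_const
    (Measurable.ite measurableSet_Ioi measurable_const measurable_const)

lemma abs_stableLevyDensity_le (x : ℝ) :
    |stableLevyDensity Y Cp Cm x| ≤ (|Cm| + |Cp|) * |x| ^ (-1 - Y) := by
  rw [stableLevyDensity, abs_mul, abs_of_nonneg (a := |x| ^ (-1 - Y)) (by positivity)]
  gcongr
  split_ifs
  · exact le_add_of_nonneg_right (abs_nonneg Cp)
  · exact le_add_of_nonneg_left (abs_nonneg Cm)
  · simpa only [abs_zero] using add_nonneg (abs_nonneg Cm) (abs_nonneg Cp)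

lemma stableLevyDensity_mul {u : ℝ} (hu : 0 < u) (x : ℝ) :
    stableLevyDensity Y Cp Cm (u * x) = u ^ (-1 - Y) * stableLevyDensity Y Cp Cm x := by
  have hneg : u * x < 0 ↔ x < 0 := by simp [mul_neg_iff, hu, hu.le]
  simp only [stableLevyDensity, mul_pos_iff_of_pos_left hu, hneg, abs_mul, abs_of_pos hu,
    Real.mul_rpow hu.le (abs_nonneg x)]
  ring

lemma integral_comp_mul_left_mul_stableLevyDensity (g : ℝ → ℝ) {u : ℝ} (hu : 0 < u) :
    ∫ x, g (u * x) * stableLevyDensity Y Cp Cm x =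
      u ^ Y * ∫ x, g x * stableLevyDensity Y Cp Cm x := by
  have hscale (x : ℝ) : g (u * x) * stableLevyDensity Y Cp Cm x =
      u ^ (1 + Y) * (g (u * x) * stableLevyDensity Y Cp Cm (u * x)) := by
    have hcancel : u ^ (1 + Y) * u ^ (-1 - Y) = 1 := by
      rw [← Real.rpow_add hu, add_add_sub_cancel, add_neg_cancel, Real.rpow_zero]
    rw [stableLevyDensity_mul hu]
    linear_combination (-g (u * x) * stableLevyDensity Y Cp Cm x) * hcancel
  simp_rw [hscale]
  rw [integral_const_mul,
    Measure.integral_comp_mul_left (fun y ↦ g y * stableLevyDensity Y Cp Cm y),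
    abs_of_pos (inv_pos.2 hu), smul_eq_mul, Real.rpow_add hu, Real.rpow_one]
  field_simp

lemma integrable_mul_stableLevyDensity {g : ℝ → ℝ} {B : ℝ} (hY0 : 0 < Y) (hY2 : Y < 2)
    (hg : AEStronglyMeasurable g) (hB : ∀ x, |g x| ≤ B * min (x ^ 2) 1) :
    Integrable fun x ↦ g x * stableLevyDensity Y Cp Cm x := by
  have hdom : Integrable fun x : ℝ ↦
      B * (|Cm| + |Cp|) * min (|x| ^ (-1 - Y + 2)) (|x| ^ (-1 - Y)) :=
    (integrable_min_abs_rpow (by linarith) (by linarith)).const_mul _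
  refine hdom.mono' (hg.mul measurable_stableLevyDensity.aestronglyMeasurable) ?_
  filter_upwards [Measure.ae_ne volume 0] with x hx
  calc ‖g x * stableLevyDensity Y Cp Cm x‖
      = |g x| * |stableLevyDensity Y Cp Cm x| := norm_mul _ _
    _ ≤ B * min (x ^ 2) 1 * ((|Cm| + |Cp|) * |x| ^ (-1 - Y)) := by
      gcongr
      exacts [(abs_nonneg _).trans (hB x), hB x, abs_stableLevyDensity_le x]
    _ = B * (|Cm| + |Cp|) * (min (x ^ 2) 1 * |x| ^ (-1 - Y)) := by ring
    _ = B * (|Cm| + |Cp|) * min (|x| ^ (-1 - Y + 2)) (|x| ^ (-1 - Y)) := by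
      rw [min_mul_of_nonneg _ _ (by positivity), sq_mul_abs_rpow hx, one_mul]

lemma integrable_one_sub_cos_mul_stableLevyDensity (hY0 : 0 < Y) (hY2 : Y < 2) (u : ℝ) :
    Integrable fun x ↦ (1 - Real.cos (u * x)) * stableLevyDensity Y Cp Cm x := by
  refine integrable_mul_stableLevyDensity (B := 2 + u ^ 2) hY0 hY2 (by fun_prop) fun x ↦ ?_
  rw [abs_of_nonneg (sub_nonneg.2 (Real.cos_le_one _)), mul_min_of_nonneg _ _ (by positivity),
    le_min_iff]
  constructor
  · nlinarith [Real.one_sub_sq_div_two_le_cos (x := u * x), sq_nonneg x, sq_nonneg (u * x)]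
  · nlinarith [Real.neg_one_le_cos (u * x), sq_nonneg u]

lemma abs_sub_stableLevyDensity_le {p : ℝ → ℝ} {K s t : ℝ}
    (hpos : ∀ z : ℝ, 0 < z → |p z - Cp * z ^ (-Y - 1)| ≤ K * min (z ^ s) (z ^ t))
    (hneg : ∀ z : ℝ, 0 < z → |p (-z) - Cm * z ^ (-Y - 1)| ≤ K * min (z ^ s) (z ^ t))
    {x : ℝ} (hx : x ≠ 0) :
    |p x - stableLevyDensity Y Cp Cm x| ≤ K * min (|x| ^ s) (|x| ^ t) := by
  rcases hx.lt_or_gt with hx | hx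
  · obtain ⟨z, rfl⟩ : ∃ z, x = -z := ⟨-x, (neg_neg x).symm⟩
    have hz : 0 < z := neg_lt_zero.1 hx
    rw [stableLevyDensity_neg_of_pos hz, abs_neg, abs_of_pos hz]
    exact hneg z hz
  · rw [stableLevyDensity_of_pos hx, abs_of_pos hx]
    exact hpos x hx

end StableLevyDensity

section CosineTransform

lemma one_sub_cos_eq_sq_mul_sinc_sq (y : ℝ) :
    1 - Real.cos y = y ^ 2 / 2 * Real.sinc (y / 2) ^ 2 := by
  have hsin : Real.sin (y / 2) = y / 2 * Real.sinc (y / 2) := by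
    rcases eq_or_ne (y / 2) 0 with h | h
    · rw [h, Real.sin_zero, zero_mul]
    · rw [Real.sinc_of_ne_zero h, mul_div_cancel₀ _ h]
  calc 1 - Real.cos y = 2 * Real.sin (y / 2) ^ 2 := by
        rw [Real.sin_sq_eq_half_sub, mul_div_cancel₀ y two_ne_zero]
        ring
    _ = y ^ 2 / 2 * Real.sinc (y / 2) ^ 2 := by
        rw [hsin]
        ring

lemma abs_sinc_sq_le_one (y : ℝ) : |Real.sinc y ^ 2| ≤ 1 := by
  simpa using Real.abs_sinc_le_one y

variable {μ : Measure ℝ}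

lemma integrable_sinc_sq_mul {g : ℝ → ℝ} (hg : Integrable g μ) (u : ℝ) :
    Integrable (fun x ↦ Real.sinc (u * x / 2) ^ 2 * g x) μ := by
  refine hg.bdd_mul (c := 1) ?_ (ae_of_all _ fun x ↦ abs_sinc_sq_le_one _)
  exact ((Real.continuous_sinc.comp (by fun_prop)).pow 2).aestronglyMeasurable

lemma tendsto_integral_sinc_sq_mul {g : ℝ → ℝ} (hg : Integrable g μ) :
    Tendsto (fun u : ℝ ↦ ∫ x, Real.sinc (u * x / 2) ^ 2 * g x ∂μ) (𝓝 0) (𝓝 (∫ x, g x ∂μ)) := by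
  have hcont : Continuous fun u : ℝ ↦ ∫ x, Real.sinc (u * x / 2) ^ 2 * g x ∂μ := by
    refine continuous_of_dominated (bound := fun x ↦ ‖g x‖)
      (fun u ↦ (integrable_sinc_sq_mul hg u).aestronglyMeasurable) (fun u ↦ ae_of_all _ fun x ↦ ?_)
      hg.norm (ae_of_all _ fun x ↦ ?_)
    · rw [norm_mul]
      exact mul_le_of_le_one_left (norm_nonneg _) (abs_sinc_sq_le_one _)
    · exact ((Real.continuous_sinc.comp (by fun_prop)).pow 2).mul_const _
  simpa using hcont.tendsto 0

variable {f : ℝ → ℝ}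

lemma one_sub_cos_mul_eq_sinc_sq_mul (u x : ℝ) :
    (1 - Real.cos (u * x)) * f x = u ^ 2 / 2 * (Real.sinc (u * x / 2) ^ 2 * (x ^ 2 * f x)) := by
  rw [one_sub_cos_eq_sq_mul_sinc_sq]
  ring

lemma integrable_one_sub_cos_mul (hf : Integrable (fun x ↦ x ^ 2 * f x) μ) (u : ℝ) :
    Integrable (fun x ↦ (1 - Real.cos (u * x)) * f x) μ := by
  simp only [one_sub_cos_mul_eq_sinc_sq_mul]
  exact (integrable_sinc_sq_mul hf u).const_mul _

lemma tendsto_integral_one_sub_cos_mul_div_sq (hf : Integrable (fun x ↦ x ^ 2 * f x) μ) :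
    Tendsto (fun u : ℝ ↦ (∫ x, (1 - Real.cos (u * x)) * f x ∂μ) / u ^ 2) (𝓝[≠] 0)
      (𝓝 ((∫ x, x ^ 2 * f x ∂μ) / 2)) := by
  refine (((tendsto_integral_sinc_sq_mul hf).div_const 2).mono_left nhdsWithin_le_nhds).congr' ?_
  filter_upwards [self_mem_nhdsWithin] with u (hu : u ≠ 0)
  simp only [one_sub_cos_mul_eq_sinc_sq_mul, integral_const_mul]
  field_simp

lemma eq_zero_of_tendsto_const_mul_rpow {b r L : ℝ} (hr : r < 0)
    (h : Tendsto (fun u : ℝ ↦ b * u ^ r) (𝓝[>] 0) (𝓝 L)) : L = 0 := by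
  rcases eq_or_ne b 0 with rfl | hb
  · simp only [zero_mul, tendsto_const_nhds_iff] at h
    exact h.symm
  · have hconv : Tendsto (fun u : ℝ ↦ u ^ r) (𝓝[>] 0) (𝓝 (b⁻¹ * L)) := by
      simpa [hb] using h.const_mul b⁻¹
    exact absurd hconv (not_tendsto_nhds_of_tendsto_atTop (tendsto_rpow_neg_nhdsGT_zero hr) _)

lemma integral_sq_mul_eq_zero_of_isLittleO {Y b : ℝ} (hY2 : Y < 2)
    (hf : Integrable (fun x ↦ x ^ 2 * f x) μ)
    (hcos : (fun u : ℝ ↦ (∫ x, (1 - Real.cos (u * x)) * f x ∂μ) - b * u ^ Y)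
      =o[𝓝[>] 0] fun u ↦ u ^ 2) :
    ∫ x, x ^ 2 * f x ∂μ = 0 := by
  have hquot := (tendsto_integral_one_sub_cos_mul_div_sq hf).mono_left
    (nhdsWithin_mono 0 fun _ ↦ ne_of_gt)
  have hpow : Tendsto (fun u : ℝ ↦ b * u ^ (Y - 2)) (𝓝[>] 0) (𝓝 ((∫ x, x ^ 2 * f x ∂μ) / 2)) := by
    rw [← sub_zero ((∫ x, x ^ 2 * f x ∂μ) / 2)]
    refine (hquot.sub hcos.tendsto_div_nhds_zero).congr' ?_
    filter_upwards [self_mem_nhdsWithin] with u (hu : 0 < u)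
    rw [Real.rpow_sub hu, Real.rpow_two]
    ring
  linarith [eq_zero_of_tendsto_const_mul_rpow (sub_neg.2 hY2) hpow]

end CosineTransform

section CharacteristicFunction

lemma integral_one_sub_cos_eq (μ : Measure ℝ) [IsProbabilityMeasure μ] (u : ℝ) :
    ∫ x, (1 - Real.cos (u * x)) ∂μ = 1 - (∫ x, Complex.exp (Complex.I * u * x) ∂μ).re := by
  have hexp : Integrable (fun x : ℝ ↦ Complex.exp (Complex.I * u * x)) μ :=
    .of_bound (by fun_prop) 1 (ae_of_all _ fun x ↦ by simp [Complex.norm_exp])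
  have hre (x : ℝ) : (Complex.exp (Complex.I * u * x)).re = Real.cos (u * x) := by
    simp [Complex.exp_re]
  have hcos := integral_re hexp
  have hcos_int := hexp.re
  simp only [RCLike.re_to_complex, hre] at hcos hcos_int
  rw [integral_sub (integrable_const 1) hcos_int, hcos]
  simp

lemma integral_mul_eq_integral_withDensity {α : Type*} [MeasurableSpace α] {μ : Measure α}
    {p : α → ℝ} (hp : AEMeasurable p μ) (hp0 : 0 ≤ᵐ[μ] p) (g : α → ℝ) :
    ∫ x, g x * p x ∂μ = ∫ x, g x ∂μ.withDensity fun x ↦ ENNReal.ofReal (p x) := by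
  rw [integral_withDensity_eq_integral_toReal_smul₀ hp.ennreal_ofReal (by simp)]
  refine integral_congr_ae (hp0.mono fun x (hx : 0 ≤ p x) ↦ ?_)
  simp only [ENNReal.toReal_ofReal hx, smul_eq_mul, mul_comm]

lemma rpow_isLittleO_id {Y : ℝ} (hY : 1 < Y) :
    (fun u : ℝ ↦ u ^ Y) =o[𝓝[>] 0] fun u ↦ u := by
  have hzero : Tendsto (fun u : ℝ ↦ u ^ (Y - 1)) (𝓝[>] 0) (𝓝 0) := by
    have h := Real.continuousAt_rpow_const 0 (Y - 1) (.inr (by linarith))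
    simpa [Real.zero_rpow (sub_pos.2 hY).ne'] using h.tendsto.mono_left nhdsWithin_le_nhds
  refine (((isLittleO_one_iff ℝ).2 hzero).mul_isBigO (isBigO_refl (fun u : ℝ ↦ u) _)).congr' ?_ ?_
  · filter_upwards [self_mem_nhdsWithin] with u (hu : 0 < u)
    rw [← Real.rpow_add_one hu.ne', sub_add_cancel]
  · simp

lemma one_sub_re_exp_neg_rpow_mul_isLittleO {Y : ℝ} (hY : 1 < Y) (κ : ℂ) :
    (fun u : ℝ ↦ 1 - (Complex.exp (-((u ^ Y : ℝ) * κ))).re - κ.re * u ^ Y)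
      =o[𝓝[>] 0] fun u ↦ u ^ 2 := by
  have hz : (fun u : ℝ ↦ -((u ^ Y : ℝ) * κ)) =o[𝓝[>] 0] fun u : ℝ ↦ u := by
    refine IsBigO.trans_isLittleO (.of_bound ‖κ‖ (.of_forall fun u ↦ ?_)) (rpow_isLittleO_id hY)
    rw [norm_neg, norm_mul, Complex.norm_real, mul_comm]
  have hz0 : Tendsto (fun u : ℝ ↦ -((u ^ Y : ℝ) * κ)) (𝓝[>] 0) (𝓝 0) :=
    hz.trans_tendsto (tendsto_id.mono_left nhdsWithin_le_nhds)
  have htaylor := ((Complex.exp_sub_sum_range_isBigO_pow 2).comp_tendsto hz0).trans_isLittleO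
    (hz.pow two_pos)
  refine (IsBigO.of_bound 1 (.of_forall fun u ↦ ?_)).trans_isLittleO htaylor
  have hre : 1 - (Complex.exp (-((u ^ Y : ℝ) * κ))).re - κ.re * u ^ Y =
      -(Complex.exp (-((u ^ Y : ℝ) * κ)) - (1 + -((u ^ Y : ℝ) * κ))).re := by
    simp only [Complex.sub_re, Complex.add_re, Complex.neg_re, Complex.one_re,
      Complex.re_ofReal_mul]
    ring
  rw [one_mul, hre, norm_neg]
  refine (Complex.abs_re_le_norm _).trans_eq ?_
  simp [Finset.sum_range_succ]

lemma stablePart_of_pos {Y Cp Cm u : ℝ} (hu : 0 < u) :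
    stablePart Y Cp Cm u = (u ^ Y : ℝ) * ((varsigma Y Cp Cm ^ Y : ℝ) *
      (1 - Complex.I * ((Cp - Cm) / (Cp + Cm) * Real.tan (π * Y / 2) : ℝ))) := by
  rw [stablePart, Real.sign_of_pos hu, abs_of_pos hu]
  push_cast
  ring

lemma one_sub_re_stableCF_isLittleO {Y Cp Cm : ℝ} (hY : 1 < Y) :
    (fun u : ℝ ↦ 1 - (stableCF Y Cp Cm u).re - varsigma Y Cp Cm ^ Y * u ^ Y)
      =o[𝓝[>] 0] fun u ↦ u ^ 2 := by
  refine (one_sub_re_exp_neg_rpow_mul_isLittleO hY ((varsigma Y Cp Cm ^ Y : ℝ) *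
    (1 - Complex.I * ((Cp - Cm) / (Cp + Cm) * Real.tan (π * Y / 2) : ℝ)))).congr' ?_ .rfl
  filter_upwards [self_mem_nhdsWithin] with u (hu : 0 < u)
  rw [stableCF, stablePart_of_pos hu, Complex.re_ofReal_mul, Complex.sub_re, Complex.one_re,
    Complex.re_mul_ofReal, Complex.I_re, zero_mul, sub_zero, mul_one]

end CharacteristicFunction

theorem second_moment_density_difference_zero_general {Y Cp Cm a K s t : ℝ} (hY0 : 0 < Y)
    (hY2 : Y < 2) (hs : -3 < s) (ht : t < -3) {p : ℝ → ℝ} (hp : AEStronglyMeasurable p)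
    (hpos : ∀ z : ℝ, 0 < z → |p z - Cp * z ^ (-Y - 1)| ≤ K * min (z ^ s) (z ^ t))
    (hneg : ∀ z : ℝ, 0 < z → |p (-z) - Cm * z ^ (-Y - 1)| ≤ K * min (z ^ s) (z ^ t))
    (hcos : (fun u : ℝ ↦ (∫ x, (1 - Real.cos (u * x)) * p x) - a * u ^ Y)
      =o[𝓝[>] 0] fun u ↦ u ^ 2) :
    Integrable (fun x ↦ x ^ 2 * (p x - stableLevyDensity Y Cp Cm x)) ∧
      ∫ x, x ^ 2 * (p x - stableLevyDensity Y Cp Cm x) = 0 := by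
  have hint : Integrable fun x ↦ x ^ 2 * (p x - stableLevyDensity Y Cp Cm x) :=
    integrable_sq_mul_of_abs_le_min_rpow hs ht (by fun_prop)
      fun _ hx ↦ abs_sub_stableLevyDensity_le hpos hneg hx
  refine ⟨hint, integral_sq_mul_eq_zero_of_isLittleO
    (b := a - ∫ x, (1 - Real.cos x) * stableLevyDensity Y Cp Cm x) hY2 hint ?_⟩
  refine hcos.congr' ?_ .rfl
  filter_upwards [self_mem_nhdsWithin] with u (hu : 0 < u)
  have hsplit : ∫ x, (1 - Real.cos (u * x)) * p x =
      (∫ x, (1 - Real.cos (u * x)) * (p x - stableLevyDensity Y Cp Cm x)) +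
        ∫ x, (1 - Real.cos (u * x)) * stableLevyDensity Y Cp Cm x := by
    rw [← integral_add (integrable_one_sub_cos_mul hint u)
      (integrable_one_sub_cos_mul_stableLevyDensity hY0 hY2 u)]
    simp only [mul_sub, sub_add_cancel]
  rw [hsplit, integral_comp_mul_left_mul_stableLevyDensity (fun y ↦ 1 - Real.cos y) hu]
  ring

/-- Lemma C.8: the second moment of the difference between the stable density
and its tail approximation vanishes: `∫ u² D(u) du = 0`. -/
theorem second_moment_density_difference_zero
    (Y Cp Cm : ℝ)
    (hY1 : 1 < Y) (hY2 : Y < 2) (hCp : 0 < Cp) (hCm : 0 < Cm)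
    (μS : Measure ℝ) [IsProbabilityMeasure μS]
    (pS : ℝ → ℝ) (hpS_meas : Measurable pS) (hpS_nonneg : ∀ x, 0 ≤ pS x)
    (hdensity : μS = volume.withDensity fun x => ENNReal.ofReal (pS x))
    (hcf : ∀ u : ℝ, ∫ x, Complex.exp (Complex.I * u * x) ∂μS = stableCF Y Cp Cm u)
    (K : ℝ)
    (hbound_pos : ∀ z : ℝ, 0 < z →
      |pS z - Cp * z ^ (-Y - 1)| ≤ K * min (z ^ (-Y - 1)) (z ^ (-2 * Y - 1)))
    (hbound_neg : ∀ z : ℝ, 0 < z →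
      |pS (-z) - Cm * z ^ (-Y - 1)| ≤ K * min (z ^ (-Y - 1)) (z ^ (-2 * Y - 1))) :
    Integrable (fun u : ℝ =>
        u ^ 2 * (pS u - (if u < 0 then Cm else if 0 < u then Cp else 0) * |u| ^ (-1 - Y))) ∧
      (∫ u : ℝ,
        u ^ 2 * (pS u - (if u < 0 then Cm else if 0 < u then Cp else 0) * |u| ^ (-1 - Y)))
        = 0 := by
  have hcos (u : ℝ) : ∫ x, (1 - Real.cos (u * x)) * pS x = 1 - (stableCF Y Cp Cm u).re := by
    rw [integral_mul_eq_integral_withDensity hpS_meas.aemeasurable (ae_of_all _ hpS_nonneg),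
      ← hdensity, integral_one_sub_cos_eq, hcf]
  exact second_moment_density_difference_zero_general (by linarith) hY2 (by linarith)
    (by linarith) hpS_meas.aestronglyMeasurable hbound_pos hbound_neg
    (by simpa only [hcos] using one_sub_re_stableCF_isLittleO hY1)

end
end

section
/- For every Y ∈ (1,2) and every ω ∈ ℝ with ω ≠ 0, the improper integral lim_{R→∞} ∫_0^R e^{iuω}·u^{1−Y} du exists and equals −|ω|^{Y−2}·e^{−i·sgn(ω)·πY/2}·Γ(2−Y). -/
open MeasureTheory Filter Set
open scoped Topology Real

noncomputable section

/-!
For `0 < re z`, Euler's integral `∫₀^∞ e^{-zu} u^{s-1} du = z^{-s} Γ(s)` extends from real `z` to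
complex `z` by analytic continuation. One integration by parts bounds its tail beyond `R` by a
constant times `R^{re s - 1} / |z|`. When `re s < 1` this bound is uniform up to the imaginary axis
away from `0`, where the truncated integral is still continuous in `z`; so the bound, and with it
the value of the improper integral, persists at `z = -iω`. The principal branch of `(-iω)^{-s}`
produces the phase.
-/

section LaplaceIntegral

variable {E : Type*} [NormedAddCommGroup E] [NormedSpace ℂ E] {μ : Measure ℝ} {f : ℝ → E}

lemma norm_exp_neg_mul_smul_le {z : ℂ} {u : ℝ} (hz : 0 ≤ z.re) (hu : 0 ≤ u) (v : E) :
    ‖Complex.exp (-(z * u)) • v‖ ≤ ‖v‖ := by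
  rw [norm_smul, Complex.norm_exp]
  refine mul_le_of_le_one_left (norm_nonneg v) (Real.exp_le_one_iff.2 ?_)
  simpa using mul_nonneg hz hu

lemma aestronglyMeasurable_exp_neg_mul_smul (hf : AEStronglyMeasurable f μ) (z : ℂ) :
    AEStronglyMeasurable (fun u : ℝ => Complex.exp (-(z * u)) • f u) μ :=
  (Continuous.aestronglyMeasurable (by fun_prop)).smul hf

lemma integrable_exp_neg_mul_smul (hμ : ∀ᵐ u ∂μ, 0 ≤ u) (hf : Integrable f μ) {z : ℂ}
    (hz : 0 ≤ z.re) : Integrable (fun u : ℝ => Complex.exp (-(z * u)) • f u) μ :=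
  hf.mono (aestronglyMeasurable_exp_neg_mul_smul hf.1 z)
    (hμ.mono fun u hu => norm_exp_neg_mul_smul_le hz hu (f u))

lemma continuousOn_integral_exp_neg_mul_smul (hμ : ∀ᵐ u ∂μ, 0 ≤ u) (hf : Integrable f μ) :
    ContinuousOn (fun z : ℂ => ∫ u, Complex.exp (-(z * u)) • f u ∂μ) {z | 0 ≤ z.re} :=
  continuousOn_of_dominated (fun z _ => aestronglyMeasurable_exp_neg_mul_smul hf.1 z)
    (fun _ hz => hμ.mono fun u hu => norm_exp_neg_mul_smul_le hz hu (f u)) hf.norm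
    (ae_of_all _ fun u => by fun_prop)

lemma mul_exp_neg_mul_le_inv {c : ℝ} (hc : 0 < c) (u : ℝ) : u * Real.exp (-(c * u)) ≤ c⁻¹ := by
  have h : c * u * Real.exp (-(c * u)) ≤ 1 :=
    (Real.mul_exp_neg_le_exp_neg_one _).trans (by simp)
  rw [← mul_one c⁻¹, le_inv_mul_iff₀ hc]
  linarith

lemma differentiableAt_integral_exp_neg_mul_smul (hμ : ∀ᵐ u ∂μ, 0 ≤ u) (hf : Integrable f μ)
    {z : ℂ} (hz : 0 < z.re) :
    DifferentiableAt ℂ (fun w : ℂ => ∫ u, Complex.exp (-(w * u)) • f u ∂μ) z := by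
  have hs : {w : ℂ | z.re / 2 < w.re} ∈ 𝓝 z :=
    (isOpen_lt continuous_const Complex.continuous_re).mem_nhds (half_lt_self hz)
  have hderiv (u : ℝ) (w : ℂ) : HasDerivAt (fun w : ℂ => Complex.exp (-(w * u)) • f u)
      ((Complex.exp (-(w * u)) * -u) • f u) w := by
    simpa using (((hasDerivAt_id w).mul_const (u : ℂ)).neg.cexp.smul_const (f u))
  have hbound {u : ℝ} (hu : 0 ≤ u) (w : ℂ) (hw : z.re / 2 < w.re) :
      ‖(Complex.exp (-(w * u)) * -u) • f u‖ ≤ (z.re / 2)⁻¹ * ‖f u‖ := by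
    rw [norm_smul]
    gcongr
    calc ‖Complex.exp (-(w * u)) * -u‖ = u * Real.exp (-(w.re * u)) := by
          simp [Complex.norm_exp, abs_of_nonneg hu, mul_comm]
      _ ≤ u * Real.exp (-(z.re / 2 * u)) := by gcongr
      _ ≤ (z.re / 2)⁻¹ := mul_exp_neg_mul_le_inv (half_pos hz) u
  exact (hasDerivAt_integral_of_dominated_loc_of_deriv_le hs
    (Eventually.of_forall (aestronglyMeasurable_exp_neg_mul_smul hf.1))
    (integrable_exp_neg_mul_smul hμ hf hz.le)
    ((Continuous.aestronglyMeasurable (by fun_prop)).smul hf.1)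
    (hμ.mono fun u hu => hbound hu) (hf.norm.const_mul _)
    (ae_of_all _ fun u w _ => hderiv u w)).2.differentiableAt

lemma smul_integral_Ioi_exp_neg_mul_smul [CompleteSpace E] {f' : ℝ → E} {z : ℂ} {a : ℝ}
    (hf : ∀ u ∈ Ici a, HasDerivAt f (f' u) u)
    (hf_int : IntegrableOn (fun u : ℝ => Complex.exp (-(z * u)) • f u) (Ioi a))
    (hf'_int : IntegrableOn (fun u : ℝ => Complex.exp (-(z * u)) • f' u) (Ioi a)) :
    z • ∫ u in Ioi a, Complex.exp (-(z * u)) • f u =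
      Complex.exp (-(z * a)) • f a + ∫ u in Ioi a, Complex.exp (-(z * u)) • f' u := by
  have hderiv : ∀ u ∈ Ici a, HasDerivAt (fun u : ℝ => Complex.exp (-(z * u)) • f u)
      (Complex.exp (-(z * u)) • f' u - z • Complex.exp (-(z * u)) • f u) u := by
    intro u hu
    have hexp : HasDerivAt (fun u : ℝ => Complex.exp (-(z * u)))
        (Complex.exp (-(z * u)) * -z) u := by
      simpa using (Complex.ofRealCLM.hasDerivAt.const_mul z).neg.cexp
    refine (hexp.smul (hf u hu)).congr_deriv ?_
    module
  have hsmul : IntegrableOn (fun u : ℝ => z • Complex.exp (-(z * u)) • f u) (Ioi a) := hf_int.smul z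
  have hderiv_int := hf'_int.sub hsmul
  have hlim := tendsto_zero_of_hasDerivAt_of_integrableOn_Ioi
    (fun u hu => hderiv u (Ioi_subset_Ici_self hu)) hderiv_int hf_int
  have key := integral_Ioi_of_hasDerivAt_of_tendsto' hderiv hderiv_int hlim
  rw [integral_sub hf'_int hsmul, integral_smul, zero_sub] at key
  rw [← sub_eq_iff_eq_add, ← neg_inj, neg_sub, key]

lemma norm_mul_norm_integral_Ioi_exp_neg_mul_smul_le [CompleteSpace E] {f' : ℝ → E} {z : ℂ}
    {a : ℝ} (hz : 0 ≤ z.re) (ha : 0 ≤ a) (hf : ∀ u ∈ Ici a, HasDerivAt f (f' u) u)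
    (hf_int : IntegrableOn (fun u : ℝ => Complex.exp (-(z * u)) • f u) (Ioi a))
    (hf' : IntegrableOn f' (Ioi a)) :
    ‖z‖ * ‖∫ u in Ioi a, Complex.exp (-(z * u)) • f u‖ ≤ ‖f a‖ + ∫ u in Ioi a, ‖f' u‖ := by
  have hnonneg : ∀ᵐ u ∂volume.restrict (Ioi a), 0 ≤ u :=
    ae_restrict_of_forall_mem measurableSet_Ioi fun u hu => ha.trans (le_of_lt hu)
  rw [← norm_smul,
    smul_integral_Ioi_exp_neg_mul_smul hf hf_int (integrable_exp_neg_mul_smul hnonneg hf' hz)]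
  refine (norm_add_le _ _).trans (add_le_add (norm_exp_neg_mul_smul_le hz ha _) ?_)
  exact norm_integral_le_of_norm_le hf'.norm
    (hnonneg.mono fun u hu => norm_exp_neg_mul_smul_le hz hu (f' u))

end LaplaceIntegral

section EulerIntegral

variable {s z : ℂ}

lemma integrableOn_Ioi_exp_neg_mul_mul_cpow (hs : 0 < s.re) (hz : 0 < z.re) :
    IntegrableOn (fun u : ℝ => Complex.exp (-(z * u)) * (u : ℂ) ^ (s - 1)) (Ioi 0) := by
  have hdom : IntegrableOn (fun u : ℝ => u ^ (s.re - 1) * Real.exp (-z.re * u ^ (1 : ℝ)))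
      (Ioi 0) := integrableOn_rpow_mul_exp_neg_mul_rpow (by linarith) one_pos hz
  refine hdom.mono' (by fun_prop) (ae_restrict_of_forall_mem measurableSet_Ioi fun u hu => ?_)
  rw [norm_mul, Complex.norm_exp, Complex.norm_cpow_eq_rpow_re_of_pos hu]
  simp [mul_comm]

lemma differentiableAt_integral_Ioi_exp_neg_mul_mul_cpow (hs : 0 < s.re) (hz : 0 < z.re) :
    DifferentiableAt ℂ
      (fun w : ℂ => ∫ u in Ioi (0 : ℝ), Complex.exp (-(w * u)) * (u : ℂ) ^ (s - 1)) z := by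
  -- `u ^ (s - 1)` is not integrable at infinity, so it borrows half of the decay of `e^{-zu}`.
  obtain ⟨c, hc, hzc⟩ : ∃ c : ℂ, 0 < c.re ∧ 0 < (z - c).re :=
    ⟨z / 2, by simpa using hz, by simpa using hz⟩
  have hshift (w : ℂ) (u : ℝ) : Complex.exp (-(w * u)) * (u : ℂ) ^ (s - 1) =
      Complex.exp (-((w - c) * u)) • (Complex.exp (-(c * u)) * (u : ℂ) ^ (s - 1)) := by
    rw [smul_eq_mul, ← mul_assoc, ← Complex.exp_add]
    ring_nf
  have hdiff := differentiableAt_integral_exp_neg_mul_smul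
    (ae_restrict_of_forall_mem measurableSet_Ioi fun u hu => le_of_lt hu)
    (integrableOn_Ioi_exp_neg_mul_mul_cpow hs hc) hzc
  exact (hdiff.comp z (differentiableAt_id.sub_const c)).congr_of_eventuallyEq
    (.of_forall fun w => integral_congr_ae (.of_forall (hshift w)))

lemma integral_Ioi_exp_neg_ofReal_mul_mul_cpow (hs : 0 < s.re) {r : ℝ} (hr : 0 < r) :
    ∫ u in Ioi (0 : ℝ), Complex.exp (-(r * u)) * (u : ℂ) ^ (s - 1) =
      (r : ℂ) ^ (-s) * Complex.Gamma s := by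
  have harg : (r : ℂ).arg ≠ π := by
    simpa only [Complex.arg_ofReal_of_nonneg hr.le] using Real.pi_ne_zero.symm
  simp_rw [mul_comm (Complex.exp _)]
  rw [Complex.integral_cpow_mul_exp_neg_mul_Ioi hs hr, one_div, Complex.inv_cpow _ _ harg,
    Complex.cpow_neg]

lemma integral_Ioi_exp_neg_mul_mul_cpow (hs : 0 < s.re) (hz : 0 < z.re) :
    ∫ u in Ioi (0 : ℝ), Complex.exp (-(z * u)) * (u : ℂ) ^ (s - 1) =
      z ^ (-s) * Complex.Gamma s := by
  have hopen : IsOpen {w : ℂ | 0 < w.re} := isOpen_lt continuous_const Complex.continuous_re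
  have hleft : AnalyticOnNhd ℂ
      (fun w : ℂ => ∫ u in Ioi (0 : ℝ), Complex.exp (-(w * u)) * (u : ℂ) ^ (s - 1))
      {w | 0 < w.re} :=
    DifferentiableOn.analyticOnNhd (fun w hw =>
      (differentiableAt_integral_Ioi_exp_neg_mul_mul_cpow hs hw).differentiableWithinAt) hopen
  have hright : AnalyticOnNhd ℂ (fun w : ℂ => w ^ (-s) * Complex.Gamma s) {w | 0 < w.re} :=
    DifferentiableOn.analyticOnNhd (fun w hw =>
      ((differentiableAt_id.cpow_const (.inl hw)).mul_const _).differentiableWithinAt) hopen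
  have hreal : Tendsto ((↑) : ℝ → ℂ) (𝓝[>] 1) (𝓝[≠] ((1 : ℝ) : ℂ)) :=
    Complex.continuous_ofReal.continuousWithinAt.tendsto_nhdsWithin fun r hr =>
      Complex.ofReal_injective.ne (ne_of_gt hr)
  refine hleft.eqOn_of_preconnected_of_frequently_eq hright
    (convex_halfSpace_re_gt 0).isPreconnected (by simp) (hreal.frequently ?_) hz
  refine Eventually.frequently (eventually_mem_nhdsWithin.mono fun r hr => ?_)
  exact integral_Ioi_exp_neg_ofReal_mul_mul_cpow hs (one_pos.trans hr)

lemma integral_Ioi_norm_deriv_ofReal_cpow (hs : s.re < 0) {R : ℝ} (hR : 0 < R) :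
    ∫ u in Ioi R, ‖s * (u : ℂ) ^ (s - 1)‖ = ‖s‖ / -s.re * R ^ s.re := by
  have hnorm : ∀ u ∈ Ioi R, ‖s * (u : ℂ) ^ (s - 1)‖ = ‖s‖ * u ^ (s.re - 1) := fun u hu => by
    simp [Complex.norm_cpow_eq_rpow_re_of_pos (hR.trans hu)]
  rw [setIntegral_congr_fun measurableSet_Ioi hnorm, integral_const_mul,
    integral_Ioi_rpow_of_lt (by linarith) hR, sub_add_cancel]
  ring

lemma norm_mul_norm_integral_Ioi_exp_neg_mul_mul_cpow_le (hs0 : 0 < s.re) (hs1 : s.re < 1)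
    (hz : 0 < z.re) {R : ℝ} (hR : 0 < R) :
    ‖z‖ * ‖∫ u in Ioi R, Complex.exp (-(z * u)) * (u : ℂ) ^ (s - 1)‖ ≤
      (1 + ‖s - 1‖ / (1 - s.re)) * R ^ (s.re - 1) := by
  have hre : (s - 1).re < 0 := by simpa using hs1
  have hne : s - 1 ≠ 0 := fun h => by simp [h] at hre
  have hderiv : IntegrableOn (fun u : ℝ => (s - 1) * (u : ℂ) ^ (s - 1 - 1)) (Ioi R) :=
    (integrableOn_Ioi_cpow_of_lt (by rw [Complex.sub_re, Complex.one_re]; linarith) hR).const_mul _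
  have hbound := norm_mul_norm_integral_Ioi_exp_neg_mul_smul_le hz.le hR.le
    (fun u hu => hasDerivAt_ofReal_cpow_const (hR.trans_le hu).ne' hne)
    ((integrableOn_Ioi_exp_neg_mul_mul_cpow hs0 hz).mono_set (Ioi_subset_Ioi hR.le)) hderiv
  rw [integral_Ioi_norm_deriv_ofReal_cpow hre hR, Complex.norm_cpow_eq_rpow_re_of_pos hR] at hbound
  refine hbound.trans_eq ?_
  simp only [Complex.sub_re, Complex.one_re]
  ring

lemma norm_mul_norm_integral_Ioc_exp_neg_mul_mul_cpow_sub_le_of_re_pos (hs0 : 0 < s.re)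
    (hs1 : s.re < 1) (hz : 0 < z.re) {R : ℝ} (hR : 0 < R) :
    ‖z‖ * ‖(∫ u in Ioc 0 R, Complex.exp (-(z * u)) * (u : ℂ) ^ (s - 1)) -
        z ^ (-s) * Complex.Gamma s‖ ≤ (1 + ‖s - 1‖ / (1 - s.re)) * R ^ (s.re - 1) := by
  rw [← integral_Ioi_exp_neg_mul_mul_cpow hs0 hz, norm_sub_rev,
    ← intervalIntegral.integral_of_le hR.le,
    ← intervalIntegral.integral_Ioi_sub_Ioi (integrableOn_Ioi_exp_neg_mul_mul_cpow hs0 hz) hR.le,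
    sub_sub_cancel]
  exact norm_mul_norm_integral_Ioi_exp_neg_mul_mul_cpow_le hs0 hs1 hz hR

lemma norm_mul_norm_integral_Ioc_exp_neg_mul_mul_cpow_sub_le (hs0 : 0 < s.re) (hs1 : s.re < 1)
    (hz : 0 ≤ z.re) (hz0 : z ≠ 0) {R : ℝ} (hR : 0 < R) :
    ‖z‖ * ‖(∫ u in Ioc 0 R, Complex.exp (-(z * u)) * (u : ℂ) ^ (s - 1)) -
        z ^ (-s) * Complex.Gamma s‖ ≤ (1 + ‖s - 1‖ / (1 - s.re)) * R ^ (s.re - 1) := by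
  have hslit : z ∈ Complex.slitPlane := by
    rcases hz.lt_or_eq with h | h
    · exact .inl h
    · exact .inr fun him => hz0 (Complex.ext h.symm him)
  have hcpow_int : IntegrableOn (fun u : ℝ => (u : ℂ) ^ (s - 1)) (Ioc 0 R) :=
    (intervalIntegral.intervalIntegrable_cpow' (by simpa using hs0)).1
  have htrunc : ContinuousWithinAt
      (fun w : ℂ => ∫ u in Ioc 0 R, Complex.exp (-(w * u)) * (u : ℂ) ^ (s - 1))
      {w | 0 < w.re} z :=
    (continuousOn_integral_exp_neg_mul_smul
      (ae_restrict_of_forall_mem measurableSet_Ioc fun u hu => hu.1.le) hcpow_int z hz).mono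
      fun w (hw : 0 < w.re) => hw.le
  have hpow : ContinuousWithinAt (fun w : ℂ => w ^ (-s) * Complex.Gamma s) {w | 0 < w.re} z :=
    ((continuousAt_id.cpow continuousAt_const hslit).mul_const _).continuousWithinAt
  refine ContinuousWithinAt.closure_le (by simpa using hz)
    (continuousWithinAt_id.norm.mul (htrunc.sub hpow).norm) continuousWithinAt_const fun w hw => ?_
  exact norm_mul_norm_integral_Ioc_exp_neg_mul_mul_cpow_sub_le_of_re_pos hs0 hs1 hw hR

theorem tendsto_integral_Ioc_exp_neg_mul_mul_cpow (hs0 : 0 < s.re) (hs1 : s.re < 1)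
    (hz : 0 ≤ z.re) (hz0 : z ≠ 0) :
    Tendsto (fun R : ℝ => ∫ u in Ioc 0 R, Complex.exp (-(z * u)) * (u : ℂ) ^ (s - 1)) atTop
      (𝓝 (z ^ (-s) * Complex.Gamma s)) := by
  have hdecay : Tendsto (fun R : ℝ => (1 + ‖s - 1‖ / (1 - s.re)) * R ^ (s.re - 1) / ‖z‖) atTop
      (𝓝 0) := by
    simpa using ((tendsto_rpow_neg_atTop (sub_pos.2 hs1)).const_mul
      (1 + ‖s - 1‖ / (1 - s.re))).div_const ‖z‖
  rw [tendsto_iff_norm_sub_tendsto_zero]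
  refine squeeze_zero' (Eventually.of_forall fun R => norm_nonneg _) ?_ hdecay
  filter_upwards [eventually_gt_atTop 0] with R hR
  rw [le_div_iff₀' (norm_pos_iff.2 hz0)]
  exact norm_mul_norm_integral_Ioc_exp_neg_mul_mul_cpow_sub_le hs0 hs1 hz hz0 hR

end EulerIntegral

section Phase

variable {ω : ℝ}

lemma log_neg_I_mul_ofReal (hω : ω ≠ 0) :
    Complex.log (-(Complex.I * ω)) = Real.log |ω| - Complex.I * Real.sign ω * π / 2 := by
  have habs : 0 < |ω| := abs_pos.2 hω
  rcases hω.lt_or_gt with hneg | hpos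
  · rw [show -(Complex.I * (ω : ℂ)) = (|ω| : ℝ) * Complex.I by simp [abs_of_neg hneg, mul_comm],
      Complex.log_ofReal_mul habs Complex.I_ne_zero, Complex.log_I, Real.sign_of_neg hneg]
    push_cast
    ring
  · rw [show -(Complex.I * (ω : ℂ)) = (|ω| : ℝ) * -Complex.I by simp [abs_of_pos hpos, mul_comm],
      Complex.log_ofReal_mul habs (neg_ne_zero.2 Complex.I_ne_zero), Complex.log_neg_I,
      Real.sign_of_pos hpos]
    push_cast
    ring

lemma exp_I_mul_sign_mul_pi (hω : ω ≠ 0) :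
    Complex.exp (Complex.I * Real.sign ω * π) = -1 := by
  rcases Real.sign_apply_eq_of_ne_zero ω hω with h | h <;>
    simp [h, Complex.exp_neg, mul_comm Complex.I, Complex.exp_pi_mul_I]

lemma neg_I_mul_ofReal_cpow_sub_two (hω : ω ≠ 0) (a : ℂ) :
    (-(Complex.I * ω)) ^ (a - 2) =
      -((|ω| : ℝ) : ℂ) ^ (a - 2) * Complex.exp (-Complex.I * Real.sign ω * π * a / 2) := by
  have habs : ((|ω| : ℝ) : ℂ) ≠ 0 := by simpa using hω
  have hexponent : (Real.log |ω| - Complex.I * Real.sign ω * π / 2) * (a - 2) =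
      Real.log |ω| * (a - 2) + -Complex.I * Real.sign ω * π * a / 2 +
        Complex.I * Real.sign ω * π := by
    ring
  rw [Complex.cpow_def_of_ne_zero (by simpa using hω), log_neg_I_mul_ofReal hω, hexponent,
    Complex.exp_add, Complex.exp_add, exp_I_mul_sign_mul_pi hω, Complex.cpow_def_of_ne_zero habs,
    Complex.ofReal_log (abs_nonneg ω)]
  ring

end Phase

theorem fresnel_type_integral_general (Y : ℂ) (hY1 : 1 < Y.re) (hY2 : Y.re < 2) (ω : ℝ)
    (hω : ω ≠ 0) :
    Tendsto
      (fun R : ℝ => ∫ u in Ioc (0 : ℝ) R, Complex.exp (Complex.I * u * ω) * (u : ℂ) ^ (1 - Y))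
      atTop
      (𝓝 (-((|ω| : ℝ) : ℂ) ^ (Y - 2) * Complex.exp (-Complex.I * Real.sign ω * π * Y / 2) *
        Complex.Gamma (2 - Y))) := by
  have hlim := tendsto_integral_Ioc_exp_neg_mul_mul_cpow (s := 2 - Y) (z := -(Complex.I * ω))
    (by simpa using hY2) (by rw [Complex.sub_re, Complex.re_ofNat]; linarith) (by simp)
    (by simpa using hω)
  rw [neg_sub, neg_I_mul_ofReal_cpow_sub_two hω] at hlim
  convert hlim using 6 <;> ring

/-- for `Y ∈ (1,2)` and `ω ≠ 0`, the improper integral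
`lim_{R→∞} ∫_0^R e^{iuω} u^{1−Y} du` exists and equals
`−|ω|^{Y−2} e^{−i·sgn(ω)·πY/2} Γ(2−Y)`. -/
theorem fresnel_type_integral
    (Y : ℝ) (hY1 : 1 < Y) (hY2 : Y < 2) (ω : ℝ) (hω : ω ≠ 0) :
    Tendsto
      (fun R : ℝ => ∫ u in Set.Ioc (0 : ℝ) R,
        Complex.exp (Complex.I * u * ω) * ((u ^ (1 - Y) : ℝ) : ℂ))
      atTop
      (𝓝 (-((|ω| ^ (Y - 2) : ℝ) : ℂ) *
        Complex.exp (-Complex.I * Real.sign ω * π * Y / 2) * (Real.Gamma (2 - Y) : ℂ))) := by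
  have hlim := fresnel_type_integral_general Y (by simpa using hY1) (by simpa using hY2) ω hω
  convert hlim using 2 with R
  · refine setIntegral_congr_fun measurableSet_Ioc fun u hu => ?_
    simp [Complex.ofReal_cpow hu.1.le]
  · simp [Complex.ofReal_cpow, ← Complex.Gamma_ofReal]

end
end
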